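/- arXiv:2107.07433 — 11 statements merged into one kernel-verified Lean document; each statement's English description precedes it below -/
import Mathlib

section
/- Let (k_n)_{n∈ℕ} be a strictly increasing sequence of natural numbers with k_0 = 0 and lim_{n→∞} (k_{n+1} − k_n)/k_{n+1} = 1, and define f : 𝒫(ℕ) → 𝒫(ℕ) by f(A) = ⋃_{n∈A} [k_n, k_{n+1}). Then f induces a regular embedding of 𝒫(ℕ)/fin into 𝒫(ℕ)/Δ_d; concretely: (i) f(A ∪ B) = f(A) ∪ f(B), f(A ∩ B) = f(A) ∩ f(B), and f(ℕ∖A) = ℕ∖f(A) for all A, B ⊆ ℕ; (ii) if A Δ B is finite then d(f(A) Δ f(B)) = 0; (iii) if A is infinite then d*(f(A)) = 1 (in particular f(A) does not have density zero); (iv) if 𝒜 is a family of infinite subsets of ℕ with pairwise finite intersections such that every infinite B ⊆ ℕ has infinite intersection with some member of 𝒜, then for every C ⊆ ℕ with d*(C) > 0 there exists A ∈ 𝒜 with d*(C ∩ f(A)) > 0. -/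
open Filter Topology MeasureTheory
open scoped symmDiff

/-- Upper asymptotic density: `d*(A) = limsup |A ∩ {0,…,n−1}|/n`. -/
noncomputable def upperDensity (A : Set ℕ) : ℝ :=
  Filter.limsup (fun n : ℕ => ((A ∩ Set.Iio n).ncard : ℝ) / n) Filter.atTop

/-- `A` has asymptotic density `α`: `lim |A ∩ {0,…,n−1}|/n = α`. -/
def HasDensity (A : Set ℕ) (α : ℝ) : Prop :=
  Filter.Tendsto (fun n : ℕ => ((A ∩ Set.Iio n).ncard : ℝ) / n) Filter.atTop (nhds α)

theorem ratio_nonneg_aux (A : Set ℕ) (n : ℕ) : (0 : ℝ) ≤ ((A ∩ Set.Iio n).ncard : ℝ) / n := by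
  positivity

theorem ratio_le_one_aux (A : Set ℕ) (n : ℕ) : ((A ∩ Set.Iio n).ncard : ℝ) / n ≤ 1 := by
  apply div_le_one_of_le₀ _ (Nat.cast_nonneg n)
  have h : (A ∩ Set.Iio n).ncard ≤ (Set.Iio n).ncard :=
    Set.ncard_le_ncard Set.inter_subset_right (Set.finite_Iio n)
  have h2 : (Set.Iio n).ncard = n := by
    rw [Set.ncard_eq_toFinset_card']; simp
  rw [h2] at h
  exact_mod_cast h

theorem ratio_bdd_aux (A : Set ℕ) : Filter.IsBoundedUnder (· ≤ ·) atTop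
    (fun n : ℕ => ((A ∩ Set.Iio n).ncard : ℝ) / n) :=
  Filter.isBoundedUnder_of ⟨1, ratio_le_one_aux A⟩

theorem ratio_cobdd_aux (A : Set ℕ) : Filter.IsCoboundedUnder (· ≤ ·) atTop
    (fun n : ℕ => ((A ∩ Set.Iio n).ncard : ℝ) / n) :=
  (Filter.isBoundedUnder_of (r := (· ≥ ·)) ⟨0, ratio_nonneg_aux A⟩).isCoboundedUnder_le

theorem upperDensity_le_one_aux (A : Set ℕ) : upperDensity A ≤ 1 :=
  Filter.limsup_le_of_le (ratio_cobdd_aux A) (Filter.Eventually.of_forall (ratio_le_one_aux A))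

theorem le_upperDensity_aux (A : Set ℕ) (c : ℝ)
    (h : ∀ N : ℕ, ∃ n ≥ N, 0 < n ∧ c * n ≤ ((A ∩ Set.Iio n).ncard : ℝ)) :
    c ≤ upperDensity A := by
  apply Filter.le_limsup_of_frequently_le _ (ratio_bdd_aux A)
  rw [Filter.frequently_atTop]
  intro N
  obtain ⟨n, hn, h0, h1⟩ := h N
  refine ⟨n, hn, ?_⟩
  rw [le_div_iff₀ (by exact_mod_cast h0)]
  exact h1

theorem hasDensity_finite_aux (A : Set ℕ) (hA : A.Finite) : HasDensity A 0 := by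
  unfold HasDensity
  refine squeeze_zero (ratio_nonneg_aux A) (g := fun n : ℕ => (A.ncard : ℝ) / n) ?_
    (tendsto_const_div_atTop_nhds_zero_nat _)
  intro n
  have : (A ∩ Set.Iio n).ncard ≤ A.ncard := Set.ncard_le_ncard Set.inter_subset_left hA
  gcongr

theorem key_aux (k : ℕ → ℕ) (hmono : StrictMono k) (A C : Set ℕ) (c : ℝ) (D : Set ℕ)
    (hD : ∀ j ∈ A, Set.Ico (k j) (k (j + 1)) ⊆ D)
    (h : ∀ N : ℕ, ∃ j ≥ N, j ∈ A ∧ ∃ n ≥ k j,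
      c * n ≤ ((C ∩ Set.Ico (k j) (k (j + 1)) ∩ Set.Iio n).ncard : ℝ)) :
    c ≤ upperDensity (C ∩ D) := by
  apply le_upperDensity_aux
  intro N
  obtain ⟨j, hj, hjA, n, hn, hc⟩ := h (N + 1)
  have := hmono.le_apply (x := j)
  refine ⟨n, by omega, by omega, hc.trans ?_⟩
  have : (C ∩ Set.Ico (k j) (k (j + 1)) ∩ Set.Iio n).ncard ≤ (C ∩ D ∩ Set.Iio n).ncard :=
    Set.ncard_le_ncard
      (Set.inter_subset_inter_left _ (Set.inter_subset_inter_right _ (hD j hjA)))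
      ((Set.finite_Iio n).inter_of_right _)
  exact_mod_cast this

/-- Proposition 1: the map `A ↦ ⋃_{n∈A} [k_n, k_{n+1})` induces a regular embedding of
`𝒫(ℕ)/fin` into `𝒫(ℕ)/Δ_d`. -/
theorem interval_map_regular_embedding
    (k : ℕ → ℕ) (hmono : StrictMono k) (hzero : k 0 = 0)
    (hlim : Tendsto (fun n : ℕ => ((k (n + 1) : ℝ) - (k n : ℝ)) / (k (n + 1) : ℝ))
      atTop (nhds 1))
    (f : Set ℕ → Set ℕ)
    (hf : ∀ A : Set ℕ, f A = ⋃ n ∈ A, Set.Ico (k n) (k (n + 1))) :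
    -- (i) `f` is a Boolean homomorphism
    (∀ A B : Set ℕ, f (A ∪ B) = f A ∪ f B) ∧
    (∀ A B : Set ℕ, f (A ∩ B) = f A ∩ f B) ∧
    (∀ A : Set ℕ, f Aᶜ = (f A)ᶜ) ∧
    -- (ii) `f` is well defined on the quotients
    (∀ A B : Set ℕ, (A ∆ B).Finite → HasDensity (f A ∆ f B) 0) ∧
    -- (iii) `f` is an embedding: infinite sets are sent to sets of upper density one
    (∀ A : Set ℕ, A.Infinite → upperDensity (f A) = 1 ∧ ¬ HasDensity (f A) 0) ∧
    -- (iv) `f` maps maximal antichains to maximal antichains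
    (∀ 𝒜 : Set (Set ℕ), (∀ A ∈ 𝒜, A.Infinite) →
      (∀ A ∈ 𝒜, ∀ B ∈ 𝒜, A ≠ B → (A ∩ B).Finite) →
      (∀ B : Set ℕ, B.Infinite → ∃ A ∈ 𝒜, (B ∩ A).Infinite) →
      ∀ C : Set ℕ, 0 < upperDensity C → ∃ A ∈ 𝒜, 0 < upperDensity (C ∩ f A)) := by
  have hex : ∀ x : ℕ, ∃ m, k m ≤ x ∧ x < k (m + 1) := by
    intro x
    have hx : ∃ n, x < k n := ⟨x + 1, lt_of_lt_of_le (Nat.lt_succ_self x) hmono.le_apply⟩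
    classical
    have h1 := Nat.find_spec hx
    have h2 : Nat.find hx ≠ 0 := by
      intro h
      rw [h, hzero] at h1
      omega
    obtain ⟨m, hm⟩ := Nat.exists_eq_succ_of_ne_zero h2
    refine ⟨m, ?_, ?_⟩
    · exact not_lt.mp (Nat.find_min hx (by omega))
    · rw [hm] at h1
      exact h1
  choose p hp1 hp2 using hex
  have hpu : ∀ x m, k m ≤ x → x < k (m + 1) → m = p x := by
    intro x m h1 h2
    have h3 := hmono.lt_iff_lt.mp (lt_of_le_of_lt h1 (hp2 x))
    have h4 := hmono.lt_iff_lt.mp (lt_of_le_of_lt (hp1 x) h2)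
    omega
  have hfp : ∀ A, f A = p ⁻¹' A := by
    intro A
    ext x
    rw [hf]
    simp only [Set.mem_iUnion, Set.mem_Ico, Set.mem_preimage, exists_prop]
    constructor
    · rintro ⟨m, hm, h1, h2⟩
      rwa [← hpu x m h1 h2]
    · intro h
      exact ⟨p x, h, hp1 x, hp2 x⟩
  have hsub : ∀ A : Set ℕ, ∀ j ∈ A, Set.Ico (k j) (k (j + 1)) ⊆ f A := by
    intro A j hj
    rw [hf]
    exact Set.subset_biUnion_of_mem (u := fun n => Set.Ico (k n) (k (n + 1))) hj
  have hsmall : ∀ e : ℝ, 0 < e → ∃ M : ℕ, ∀ j ≥ M, (k j : ℝ) ≤ e * k (j + 1) := by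
    intro e he
    have h := hlim.eventually (lt_mem_nhds (show 1 - e < 1 by linarith))
    obtain ⟨M, hM⟩ := Filter.eventually_atTop.mp h
    refine ⟨M, fun j hj => ?_⟩
    have h1 := hM j hj
    have hpos : (0 : ℝ) < k (j + 1) := by
      have := hmono.le_apply (x := j + 1)
      exact_mod_cast (by omega : 0 < k (j + 1))
    rw [lt_div_iff₀ hpos] at h1
    nlinarith
  have hdens : ∀ A : Set ℕ, A.Infinite → upperDensity (f A) = 1 := by
    intro A hA
    refine le_antisymm (upperDensity_le_one_aux _) ?_
    refine le_of_forall_lt fun c hc => ?_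
    obtain ⟨c', hc1, hc2⟩ := exists_between hc
    refine lt_of_lt_of_le hc1 ?_
    rw [← Set.univ_inter (f A)]
    apply key_aux k hmono A _ _ _ (hsub A)
    intro N
    obtain ⟨M, hM⟩ := hsmall (1 - c') (by linarith)
    obtain ⟨j, hj, hjN⟩ := hA.exists_gt (N + M)
    have hle : k j ≤ k (j + 1) := hmono.monotone (Nat.le_succ j)
    refine ⟨j, by omega, hj, k (j + 1), hle, ?_⟩
    have h1 : (Set.univ ∩ Set.Ico (k j) (k (j + 1)) ∩ Set.Iio (k (j + 1))) =
        Set.Ico (k j) (k (j + 1)) := by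
      ext x
      simp
    have h2 : (Set.Ico (k j) (k (j + 1))).ncard = k (j + 1) - k j := by
      rw [Set.ncard_eq_toFinset_card']; simp
    rw [h1, h2, Nat.cast_sub hle]
    have := hM j (by omega)
    linarith
  refine ⟨?_, ?_, ?_, ?_, ?_, ?_⟩
  · intro A B
    simp only [hfp, Set.preimage_union]
  · intro A B
    simp only [hfp, Set.preimage_inter]
  · intro A
    simp only [hfp, Set.preimage_compl]
  · intro A B hAB
    apply hasDensity_finite_aux
    have h1 : f A ∆ f B = f (A ∆ B) := by
      rw [hfp, hfp, hfp]
      rfl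
    rw [h1, hf]
    exact hAB.biUnion fun n _ => Set.finite_Ico _ _
  · intro A hA
    refine ⟨hdens A hA, fun h => ?_⟩
    have h1 : upperDensity (f A) = 0 := Filter.Tendsto.limsup_eq h
    rw [hdens A hA] at h1
    exact one_ne_zero h1
  · intro 𝒜 _ _ hmax C hC
    obtain ⟨c, hc0, hc⟩ := exists_between hC
    have hfr := Filter.frequently_lt_of_lt_limsup (ratio_cobdd_aux C) hc
    rw [Filter.frequently_atTop] at hfr
    let B : Set ℕ := {j | ∃ n ≥ k j,
      c / 4 * n ≤ ((C ∩ Set.Ico (k j) (k (j + 1)) ∩ Set.Iio n).ncard : ℝ)}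
    have hB : B.Infinite := by
      apply Set.infinite_of_forall_exists_gt
      intro N
      obtain ⟨M, hM⟩ := hsmall (c / 4) (by linarith)
      obtain ⟨n, hn, hcn⟩ := hfr (k (N + M + 2))
      have hpn : N + M + 2 < p n + 1 := hmono.lt_iff_lt.mp (lt_of_le_of_lt hn (hp2 n))
      obtain ⟨j, hj⟩ : ∃ j, p n = j + 1 := ⟨p n - 1, by omega⟩
      have hk1 := hp1 n
      have hk2 := hp2 n
      rw [hj] at hk1 hk2
      have hn0 : 0 < n := by
        have := hmono.le_apply (x := j + 1)
        omega
      have hn0' : (0 : ℝ) < n := by exact_mod_cast hn0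
      rw [lt_div_iff₀ hn0'] at hcn
      have hsm := hM j (by omega)
      have hk1' : (k (j + 1) : ℝ) ≤ n := by exact_mod_cast hk1
      have hcov : C ∩ Set.Iio n ⊆ Set.Iio (k j) ∪
          ((C ∩ Set.Ico (k j) (k (j + 1)) ∩ Set.Iio (k (j + 1))) ∪
           (C ∩ Set.Ico (k (j + 1)) (k (j + 1 + 1)) ∩ Set.Iio n)) := by
        rintro x ⟨hx, hxn⟩
        simp only [Set.mem_Iio, Set.mem_union, Set.mem_inter_iff, Set.mem_Ico] at hxn ⊢
        by_cases h1 : x < k j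
        · exact Or.inl h1
        · by_cases h2 : x < k (j + 1)
          · exact Or.inr (Or.inl ⟨⟨hx, by omega, h2⟩, h2⟩)
          · exact Or.inr (Or.inr ⟨⟨hx, by omega, by omega⟩, hxn⟩)
      have hcard := Set.ncard_le_ncard hcov
        ((Set.finite_Iio _).union (((Set.finite_Iio _).inter_of_right _).union
          ((Set.finite_Iio _).inter_of_right _)))
      have hu1 := hcard.trans (Set.ncard_union_le _ _)
      have hu2 := hu1.trans (Nat.add_le_add_left (Set.ncard_union_le _ _) _)
      have h2 : (Set.Iio (k j)).ncard = k j := by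
        rw [Set.ncard_eq_toFinset_card']; simp
      rw [h2] at hu2
      have hu3 : ((C ∩ Set.Iio n).ncard : ℝ) ≤ (k j : ℝ) +
          (((C ∩ Set.Ico (k j) (k (j + 1)) ∩ Set.Iio (k (j + 1))).ncard : ℝ) +
           ((C ∩ Set.Ico (k (j + 1)) (k (j + 1 + 1)) ∩ Set.Iio n).ncard : ℝ)) := by
        exact_mod_cast hu2
      have hcm : c / 4 * k (j + 1) ≤ c / 4 * n := by gcongr
      by_cases hcase : c / 4 * n ≤
          ((C ∩ Set.Ico (k (j + 1)) (k (j + 1 + 1)) ∩ Set.Iio n).ncard : ℝ)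
      · exact ⟨j + 1, ⟨n, hk1, hcase⟩, by omega⟩
      · refine ⟨j, ⟨k (j + 1), hmono.monotone (Nat.le_succ j), ?_⟩, by omega⟩
        have : 0 < c * n := by positivity
        linarith
    obtain ⟨A, hA, hBA⟩ := hmax B hB
    refine ⟨A, hA, lt_of_lt_of_le (show 0 < c / 4 by linarith) ?_⟩
    apply key_aux k hmono A _ _ _ (hsub A)
    intro N
    obtain ⟨j, hj, hjN⟩ := hBA.exists_gt N
    exact ⟨j, hjN.le, hj.2, hj.1⟩
end

section
/- The quotient 𝒫(ℕ)/Δ_d has no (ω,ω)-gaps: for all sequences (A_n)_{n∈ℕ} and (B_m)_{m∈ℕ} of subsets of ℕ such that d(A_n ∩ B_m) = 0 for all n, m ∈ ℕ, there exists C ⊆ ℕ such that d(A_n ∖ C) = 0 for every n and d(C ∩ B_m) = 0 for every m. -/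
open Filter Topology MeasureTheory
open scoped symmDiff

lemma hd_mono {S T : Set ℕ} (hT : HasDensity T 0) (hST : S ⊆ T) : HasDensity S 0 := by
  unfold HasDensity at *
  refine squeeze_zero (fun n => by positivity) (fun n => ?_) hT
  have : (S ∩ Set.Iio n).ncard ≤ (T ∩ Set.Iio n).ncard :=
    Set.ncard_le_ncard (Set.inter_subset_inter_left _ hST) ((Set.finite_Iio n).inter_of_right _)
  gcongr

lemma hd_union {S T : Set ℕ} (hS : HasDensity S 0) (hT : HasDensity T 0) :
    HasDensity (S ∪ T) 0 := by
  unfold HasDensity at *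
  have := hS.add hT
  rw [add_zero] at this
  refine squeeze_zero (fun n => by positivity) (fun n => ?_) this
  rw [← add_div]
  have h2 : ((S ∪ T) ∩ Set.Iio n).ncard ≤ (S ∩ Set.Iio n).ncard + (T ∩ Set.Iio n).ncard := by
    rw [Set.union_inter_distrib_right]
    exact Set.ncard_union_le _ _
  have h3 : (((S ∪ T) ∩ Set.Iio n).ncard : ℝ) ≤ (S ∩ Set.Iio n).ncard + (T ∩ Set.Iio n).ncard := by
    exact_mod_cast h2
  gcongr

lemma hd_finite {S : Set ℕ} (hS : S.Finite) : HasDensity S 0 := by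
  unfold HasDensity
  refine squeeze_zero (fun n => by positivity) (fun n => ?_)
    (tendsto_const_div_atTop_nhds_zero_nat (S.ncard : ℝ))
  have : (S ∩ Set.Iio n).ncard ≤ S.ncard := Set.ncard_le_ncard Set.inter_subset_left hS
  gcongr

lemma hd_biUnion {ι : Type} (s : Finset ι) (F : ι → Set ℕ) (hF : ∀ i, HasDensity (F i) 0) :
    HasDensity (⋃ i ∈ s, F i) 0 := by
  classical
  induction s using Finset.induction_on with
  | empty => simpa using hd_finite Set.finite_empty
  | insert a s _ ih =>
    rw [Finset.set_biUnion_insert]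
    exact hd_union (hF a) ih

/-- The density ideal is a P-ideal. -/
lemma hd_pideal (Z : ℕ → Set ℕ) (hm : Monotone Z) (hZ : ∀ k, HasDensity (Z k) 0) :
    ∃ W : Set ℕ, HasDensity W 0 ∧ ∀ k, (Z k \ W).Finite := by
  have hf : ∀ k : ℕ, ∃ f : ℕ, k ≤ f ∧ ∀ N ≥ f,
      ((Z k ∩ Set.Iio N).ncard : ℝ) / N < 1 / ((k : ℝ) + 1) := by
    intro k
    have h1 := (hZ k).eventually_lt_const (show (0 : ℝ) < 1 / ((k : ℝ) + 1) by positivity)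
    obtain ⟨f, hf⟩ := Filter.eventually_atTop.1 h1
    exact ⟨max k f, le_max_left _ _, fun N hN => hf N (le_trans (le_max_right _ _) hN)⟩
  choose f hkf hf using hf
  refine ⟨{x | ∃ k, x ∈ Z k ∧ f k ≤ x}, ?_, fun k => ?_⟩
  · unfold HasDensity
    rw [Metric.tendsto_atTop]
    intro ε hε
    obtain ⟨K, hK⟩ := exists_nat_one_div_lt hε
    refine ⟨f K, fun N hN => ?_⟩
    have hKN : K ≤ N := (hkf K).trans hN
    set k := Nat.findGreatest (fun j => f j ≤ N) N with hk
    have hfk : f k ≤ N := Nat.findGreatest_spec (P := fun j => f j ≤ N) hKN hN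
    have hKk : K ≤ k := Nat.le_findGreatest hKN hN
    have hsub : ({x | ∃ k, x ∈ Z k ∧ f k ≤ x} ∩ Set.Iio N).ncard ≤ (Z k ∩ Set.Iio N).ncard := by
      apply Set.ncard_le_ncard _ ((Set.finite_Iio N).inter_of_right _)
      rintro x ⟨⟨j, hxj, hj⟩, hx⟩
      have hx' : x < N := hx
      have hjN : f j ≤ N := by omega
      exact ⟨hm (Nat.le_findGreatest ((hkf j).trans hjN) hjN) hxj, hx⟩
    rw [Real.dist_eq, sub_zero, abs_of_nonneg (by positivity)]
    calc _ ≤ ((Z k ∩ Set.Iio N).ncard : ℝ) / N := by gcongr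
      _ < 1 / ((k : ℝ) + 1) := hf k N hfk
      _ ≤ 1 / ((K : ℝ) + 1) := by gcongr
      _ < ε := hK
  · refine (Set.finite_Iio (f k)).subset ?_
    rintro x ⟨hx, hn⟩
    by_contra hc
    exact hn ⟨k, hx, not_lt.1 hc⟩

/-- Proposition 2: `𝒫(ℕ)/Δ_d` has no `(ω,ω)`-gaps. -/
theorem no_omega_omega_gaps
    (A B : ℕ → Set ℕ) (h : ∀ n m : ℕ, HasDensity (A n ∩ B m) 0) :
    ∃ C : Set ℕ, (∀ n : ℕ, HasDensity (A n \ C) 0) ∧ (∀ m : ℕ, HasDensity (C ∩ B m) 0) := by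
  obtain ⟨W, hW, hZW⟩ := hd_pideal
    (fun k => ⋃ p ∈ Finset.range (k + 1) ×ˢ Finset.range (k + 1), A p.1 ∩ B p.2)
    (by
      intro i j hij x hx
      simp only [Set.mem_iUnion, Finset.mem_product, Finset.mem_range] at hx ⊢
      obtain ⟨p, ⟨h1, h2⟩, hx⟩ := hx
      exact ⟨p, ⟨by omega, by omega⟩, hx⟩)
    (fun k => hd_biUnion _ (fun p : ℕ × ℕ => A p.1 ∩ B p.2) (fun p => h p.1 p.2))
  refine ⟨{x | x ∉ W ∧ ∃ n, x ∈ A n ∧ ∀ m ≤ n, x ∉ B m}, fun n => ?_, fun m => ?_⟩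
  · refine hd_mono (hd_union hW (hd_finite (hZW n))) ?_
    rintro x ⟨hx, hc⟩
    by_cases hw : x ∈ W
    · exact Or.inl hw
    refine Or.inr ⟨?_, hw⟩
    by_contra hz
    refine hc ⟨hw, n, hx, fun m hm hb => hz ?_⟩
    simp only [Set.mem_iUnion, Finset.mem_product, Finset.mem_range]
    exact ⟨(n, m), ⟨by simp, by simp; omega⟩, hx, hb⟩
  · refine hd_mono (hd_finite (hZW m)) ?_
    rintro x ⟨⟨hw, n, hx, hn⟩, hb⟩
    refine ⟨?_, hw⟩
    have hnm : n < m := by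
      by_contra hc
      exact hn m (not_lt.1 hc) hb
    simp only [Set.mem_iUnion, Finset.mem_product, Finset.mem_range]
    exact ⟨(n, m), ⟨by simp; omega, by simp⟩, hx, hb⟩
end

section
/- The quotient 𝒫(ℕ)/Δ_d has an ω-limit: there exists a sequence (A_n)_{n∈ℕ} of subsets of ℕ with A_{n+1} ⊆ A_n and d(A_n) = 2^{−n} for every n (so each A_n is a nonzero element of 𝒫(ℕ)/Δ_d), such that there is no B ⊆ ℕ with d*(B) > 0 and d(B ∖ A_n) = 0 for all n; i.e., the descending chain ([A_n])_n has no nonzero lower bound in 𝒫(ℕ)/Δ_d. -/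
open Filter Topology MeasureTheory
open scoped symmDiff

theorem density_multiples (n : ℕ) : HasDensity {k | 2 ^ n ∣ k} ((2 : ℝ)⁻¹ ^ n) := by
  unfold HasDensity
  have h := (tendsto_nat_ceil_mul_div_atTop (R := ℝ) (a := (2 : ℝ)⁻¹ ^ n) (by positivity)).comp
    tendsto_natCast_atTop_atTop
  refine h.congr fun N => ?_
  have e : {k : ℕ | 2 ^ n ∣ k} ∩ Set.Iio N
      = (fun k => 2 ^ n * k) '' Set.Iio ⌈(2 : ℝ)⁻¹ ^ n * N⌉₊ := by
    have key : ∀ k : ℕ, k < ⌈(2 : ℝ)⁻¹ ^ n * N⌉₊ ↔ 2 ^ n * k < N := by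
      intro k
      rw [Nat.lt_ceil, inv_pow, lt_inv_mul_iff₀ (by positivity)]
      exact_mod_cast Iff.rfl
    ext x
    simp only [Set.mem_inter_iff, Set.mem_setOf_eq, Set.mem_Iio, Set.mem_image, key]
    constructor
    · rintro ⟨⟨k, rfl⟩, hk⟩
      exact ⟨k, hk, rfl⟩
    · rintro ⟨k, hk, rfl⟩
      exact ⟨⟨k, rfl⟩, hk⟩
  rw [e, Set.ncard_image_of_injective _ (fun a b hab => by simpa using hab)]
  simp [Set.ncard_eq_toFinset_card']

/-- Proposition 3: `𝒫(ℕ)/Δ_d` has an `ω`-limit. -/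
theorem exists_omega_limit :
    ∃ A : ℕ → Set ℕ,
      (∀ n : ℕ, A (n + 1) ⊆ A n) ∧
      (∀ n : ℕ, HasDensity (A n) ((2 : ℝ)⁻¹ ^ n)) ∧
      ¬ ∃ B : Set ℕ, 0 < upperDensity B ∧ ∀ n : ℕ, HasDensity (B \ A n) 0 := by
  refine ⟨fun n => {k | 2 ^ n ∣ k}, fun n k hk => ?_, density_multiples, ?_⟩
  · exact (pow_dvd_pow 2 n.le_succ).trans hk
  · rintro ⟨B, hB, h⟩
    have hle : ∀ n : ℕ, upperDensity B ≤ (2 : ℝ)⁻¹ ^ n := by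
      intro n
      have ht := Tendsto.add (density_multiples n) (h n)
      rw [add_zero] at ht
      rw [← ht.limsup_eq]
      refine limsup_le_limsup (Eventually.of_forall fun N => ?_) ?_ ht.isBoundedUnder_le
      · simp only
        rw [← add_div]
        gcongr
        have hfin : (Set.Iio N).Finite := Set.finite_Iio N
        have h1 := Set.ncard_le_ncard
          (s := B ∩ Set.Iio N)
          (t := ({k | 2 ^ n ∣ k} ∩ Set.Iio N) ∪ ((B \ {k | 2 ^ n ∣ k}) ∩ Set.Iio N))
          (fun x hx => by
            by_cases hd : x ∈ {k | 2 ^ n ∣ k}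
            · exact Or.inl ⟨hd, hx.2⟩
            · exact Or.inr ⟨⟨hx.1, hd⟩, hx.2⟩)
          ((hfin.inter_of_right _).union (hfin.inter_of_right _))
        exact_mod_cast h1.trans (Set.ncard_union_le _ _)
      · exact IsBoundedUnder.isCoboundedUnder_le
          (isBoundedUnder_of ⟨0, fun N => by positivity⟩)
    obtain ⟨n, hn⟩ := exists_pow_lt_of_lt_one hB (show (2 : ℝ)⁻¹ < 1 by norm_num)
    exact absurd (hle n) (not_le.mpr hn)
end

section
/- There exists an injective Boolean algebra homomorphism from the countable product Boolean algebra ∏_{n∈ℕ} (𝒫(ℕ)/Δ_d) into 𝒫(ℕ)/Δ_d. -/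
open Filter Topology MeasureTheory
open scoped symmDiff

lemma aux_exists (m : ℕ) : ∃ p : ℕ × ℕ, m + 1 = 2 ^ p.1 * (2 * p.2 + 1) := by
  obtain ⟨k, q, ⟨j, hj⟩, h⟩ := Nat.exists_eq_two_pow_mul_odd (n := m + 1) (by omega)
  exact ⟨(k, j), by rw [h, hj]⟩

lemma aux_unique (k : ℕ) : ∀ k' j j' : ℕ, 2 ^ k * (2 * j + 1) = 2 ^ k' * (2 * j' + 1) →
    k = k' ∧ j = j' := by
  induction k with
  | zero =>
    intro k' j j' h
    cases k' with
    | zero => simp at h; exact ⟨rfl, h⟩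
    | succ k' => rw [pow_succ, mul_right_comm] at h; omega
  | succ k ih =>
    intro k' j j' h
    cases k' with
    | zero => rw [pow_succ, mul_right_comm] at h; omega
    | succ k' =>
      rw [pow_succ, mul_right_comm, pow_succ, mul_right_comm (2 ^ k') 2] at h
      obtain ⟨h1, h2⟩ := ih k' j j' (by omega)
      exact ⟨by rw [h1], h2⟩

noncomputable def auxP (m : ℕ) : ℕ × ℕ := (aux_exists m).choose

lemma auxP_spec (m : ℕ) : m + 1 = 2 ^ (auxP m).1 * (2 * (auxP m).2 + 1) :=
  (aux_exists m).choose_spec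

def auxF (k j : ℕ) : ℕ := 2 ^ k * (2 * j + 1) - 1

lemma auxF_succ (k j : ℕ) : auxF k j + 1 = 2 ^ k * (2 * j + 1) := by
  have : 0 < 2 ^ k * (2 * j + 1) := by positivity
  unfold auxF; omega

lemma auxP_F (k j : ℕ) : auxP (auxF k j) = (k, j) := by
  have h := auxP_spec (auxF k j)
  rw [auxF_succ] at h
  obtain ⟨h1, h2⟩ := aux_unique _ _ _ _ h
  exact Prod.ext h1.symm h2.symm

lemma auxF_P (m : ℕ) : auxF (auxP m).1 (auxP m).2 = m := by
  have h := auxP_spec m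
  have h2 := auxF_succ (auxP m).1 (auxP m).2
  omega

lemma auxF_inj (k : ℕ) : Function.Injective (auxF k) := by
  intro i j h
  have h2 := congrArg auxP h
  rw [auxP_F, auxP_F] at h2
  exact (Prod.ext_iff.1 h2).2

lemma le_auxF (k j : ℕ) : j ≤ auxF k j := by
  have h := auxF_succ k j
  have : 1 ≤ 2 ^ k := Nat.one_le_two_pow
  nlinarith

def auxPhi (a : ℕ → Set ℕ) : Set ℕ := {m | (auxP m).2 ∈ a (auxP m).1}

lemma fin_Iio (A : Set ℕ) (n : ℕ) : (A ∩ Set.Iio n).Finite :=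
  (Set.finite_Iio n).subset Set.inter_subset_right

lemma hd_empty : HasDensity ∅ 0 := by
  simp [HasDensity]

lemma hd_of_le {A : Set ℕ} {u : ℕ → ℝ} (hu : Tendsto u atTop (𝓝 0))
    (h : ∀ n : ℕ, ((A ∩ Set.Iio n).ncard : ℝ) / n ≤ u n) : HasDensity A 0 :=
  squeeze_zero (fun n => by positivity) h hu

lemma hd_mono_s3 {A B : Set ℕ} (h : A ⊆ B) (hB : HasDensity B 0) : HasDensity A 0 := by
  refine hd_of_le hB fun n => ?_
  have := Set.ncard_le_ncard (Set.inter_subset_inter_left (Set.Iio n) h) (fin_Iio B n)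
  gcongr

lemma hd_union_s3 {A B : Set ℕ} (hA : HasDensity A 0) (hB : HasDensity B 0) :
    HasDensity (A ∪ B) 0 := by
  have hs := Tendsto.add hA hB
  rw [add_zero] at hs
  refine hd_of_le hs fun n => ?_
  rw [← add_div, Set.union_inter_distrib_right]
  have := Set.ncard_union_le (A ∩ Set.Iio n) (B ∩ Set.Iio n)
  gcongr
  exact_mod_cast this

lemma hd_image {A : Set ℕ} (k : ℕ) (hA : HasDensity A 0) : HasDensity (auxF k '' A) 0 := by
  refine hd_of_le hA fun n => ?_
  have h1 : auxF k '' A ∩ Set.Iio n ⊆ auxF k '' (A ∩ Set.Iio n) := by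
    rintro _ ⟨⟨j, hj, rfl⟩, hn⟩
    exact ⟨j, ⟨hj, (le_auxF k j).trans_lt hn⟩, rfl⟩
  have h2 := Set.ncard_le_ncard h1 ((fin_Iio A n).image _)
  have h3 := h2.trans (Set.ncard_image_le (fin_Iio A n))
  gcongr

lemma hd_trunc (c : ℕ → Set ℕ) (hc : ∀ n, HasDensity (c n) 0) (K : ℕ) :
    HasDensity {m | m ∈ auxPhi c ∧ (auxP m).1 < K} 0 := by
  induction K with
  | zero => simpa using hd_empty
  | succ K ih =>
    refine hd_mono_s3 ?_ (hd_union_s3 ih (hd_image K (hc K)))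
    rintro m ⟨h1, h2⟩
    rcases Nat.lt_succ_iff_lt_or_eq.1 h2 with h | h
    · exact Or.inl ⟨h1, h⟩
    · refine Or.inr ⟨(auxP m).2, ?_, ?_⟩
      · rw [← h]; exact h1
      · rw [← h]; exact auxF_P m

lemma tail_card (K n : ℕ) :
    (({m | K ≤ (auxP m).1} ∩ Set.Iio n).ncard : ℝ) / n ≤ 1 / 2 ^ K := by
  have h1 : ({m | K ≤ (auxP m).1} ∩ Set.Iio n) ⊆
      (fun i => 2 ^ K * (i + 1) - 1) '' Set.Iio (n / 2 ^ K) := by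
    rintro m ⟨h, hn⟩
    have hd : 2 ^ K ∣ m + 1 := by
      rw [auxP_spec m]
      exact (pow_dvd_pow 2 h).mul_right _
    obtain ⟨q, hq⟩ := hd
    have hq0 : q ≠ 0 := by rintro rfl; simp at hq
    obtain ⟨i, rfl⟩ := Nat.exists_eq_succ_of_ne_zero hq0
    refine ⟨i, ?_, ?_⟩
    · have hn' : m < n := hn
      have : i + 1 ≤ n / 2 ^ K := by
        rw [Nat.le_div_iff_mul_le (by positivity), mul_comm]
        have : m + 1 = 2 ^ K * (i + 1) := hq
        omega
      exact this
    · have : m + 1 = 2 ^ K * (i + 1) := hq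
      show 2 ^ K * (i + 1) - 1 = m
      omega
  have h2 := (Set.ncard_le_ncard h1 ((Set.finite_Iio _).image _)).trans
    (Set.ncard_image_le (Set.finite_Iio _))
  have h3 : (Set.Iio (n / 2 ^ K)).ncard = n / 2 ^ K := by
    rw [← Finset.coe_Iio, Set.ncard_coe_finset]; simp
  rw [h3] at h2
  have h4 : (({m | K ≤ (auxP m).1} ∩ Set.Iio n).ncard : ℝ) ≤ n / 2 ^ K := by
    calc _ ≤ ((n / 2 ^ K : ℕ) : ℝ) := by exact_mod_cast h2
      _ ≤ n / 2 ^ K := by simpa using Nat.cast_div_le (α := ℝ) (m := n) (n := 2 ^ K)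
  refine div_le_of_le_mul₀ (by positivity) (by positivity) ?_
  rw [one_div_mul_eq_div]; exact h4

lemma hd_phi (c : ℕ → Set ℕ) (hc : ∀ n, HasDensity (c n) 0) : HasDensity (auxPhi c) 0 := by
  unfold HasDensity
  rw [Metric.tendsto_atTop]
  intro ε hε
  obtain ⟨K, hK⟩ := exists_pow_lt_of_lt_one (half_pos hε) (by norm_num : (1 / 2 : ℝ) < 1)
  obtain ⟨N, hN⟩ := Metric.tendsto_atTop.1 (hd_trunc c hc K) (ε / 2) (half_pos hε)
  refine ⟨N, fun n hn => ?_⟩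
  have h1 := hN n hn
  rw [Real.dist_0_eq_abs, abs_of_nonneg (by positivity)] at h1 ⊢
  have h2 := tail_card K n
  have h3 : auxPhi c ∩ Set.Iio n ⊆ ({m | m ∈ auxPhi c ∧ (auxP m).1 < K} ∩ Set.Iio n) ∪
      ({m | K ≤ (auxP m).1} ∩ Set.Iio n) := by
    rintro m ⟨h, hn⟩
    rcases lt_or_ge (auxP m).1 K with h' | h'
    · exact Or.inl ⟨⟨h, h'⟩, hn⟩
    · exact Or.inr ⟨h', hn⟩
  have h4 := (Set.ncard_le_ncard h3 ((fin_Iio _ _).union (fin_Iio _ _))).trans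
    (Set.ncard_union_le _ _)
  have h5 : ((auxPhi c ∩ Set.Iio n).ncard : ℝ) / n ≤
      (({m | m ∈ auxPhi c ∧ (auxP m).1 < K} ∩ Set.Iio n).ncard : ℝ) / n +
      (({m | K ≤ (auxP m).1} ∩ Set.Iio n).ncard : ℝ) / n := by
    rw [← add_div]
    gcongr
    exact_mod_cast h4
  rw [one_div_pow] at hK
  linarith

lemma hd_of_phi (c : ℕ → Set ℕ) (h : HasDensity (auxPhi c) 0) (k : ℕ) :
    HasDensity (c k) 0 := by
  have hpos : 0 < 2 ^ (k + 1) := by positivity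
  have ht : Tendsto (fun n : ℕ => 2 ^ (k + 1) * n) atTop atTop :=
    tendsto_id.const_mul_atTop' hpos
  have h1 := (Tendsto.comp h ht).const_mul ((2 : ℝ) ^ (k + 1))
  rw [mul_zero] at h1
  refine hd_of_le h1 fun n => ?_
  have h2 : auxF k '' (c k ∩ Set.Iio n) ⊆ auxPhi c ∩ Set.Iio (2 ^ (k + 1) * n) := by
    rintro _ ⟨j, ⟨hj, hn⟩, rfl⟩
    refine ⟨?_, ?_⟩
    · show (auxP (auxF k j)).2 ∈ c (auxP (auxF k j)).1
      rw [auxP_F]; exact hj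
    · have h3 := auxF_succ k j
      have hn' : j + 1 ≤ n := hn
      have h4 : 2 ^ k * (2 * j + 1) ≤ 2 ^ k * (2 * n) := by gcongr; omega
      show auxF k j < _
      rw [pow_succ, mul_assoc]
      omega
  have h5 := Set.ncard_le_ncard h2 (fin_Iio _ _)
  rw [Set.ncard_image_of_injective _ (auxF_inj k)] at h5
  simp only [Function.comp]
  push_cast
  rw [mul_div_assoc', mul_div_mul_left _ _ (by positivity)]
  gcongr

lemma phi_symmDiff (a b : ℕ → Set ℕ) :
    auxPhi a ∆ auxPhi b = auxPhi (fun n => a n ∆ b n) := rfl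

/-- Proposition 4: the countable product `∏_{n∈ℕ} (𝒫(ℕ)/Δ_d)` embeds into `𝒫(ℕ)/Δ_d`.
Stated on representatives: `φ` is well defined modulo `Δ_d` (coordinatewise on the source),
preserves the Boolean operations modulo `Δ_d`, and is injective modulo `Δ_d`. -/
theorem product_embeds_into_density_quotient :
    ∃ φ : (ℕ → Set ℕ) → Set ℕ,
      -- well defined on the quotient
      (∀ a b : ℕ → Set ℕ, (∀ n, HasDensity (a n ∆ b n) 0) → HasDensity (φ a ∆ φ b) 0) ∧
      -- Boolean algebra homomorphism modulo `Δ_d`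
      (∀ a b : ℕ → Set ℕ, HasDensity (φ (fun n => a n ∩ b n) ∆ (φ a ∩ φ b)) 0) ∧
      (∀ a b : ℕ → Set ℕ, HasDensity (φ (fun n => a n ∪ b n) ∆ (φ a ∪ φ b)) 0) ∧
      (∀ a : ℕ → Set ℕ, HasDensity (φ (fun n => (a n)ᶜ) ∆ (φ a)ᶜ) 0) ∧
      -- injective on the quotient
      (∀ a b : ℕ → Set ℕ, HasDensity (φ a ∆ φ b) 0 → ∀ n, HasDensity (a n ∆ b n) 0) := by
  refine ⟨auxPhi, ?_, ?_, ?_, ?_, ?_⟩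
  · intro a b h
    rw [phi_symmDiff]
    exact hd_phi _ h
  · intro a b
    rw [show auxPhi (fun n => a n ∩ b n) = auxPhi a ∩ auxPhi b from rfl, symmDiff_self]
    exact hd_empty
  · intro a b
    rw [show auxPhi (fun n => a n ∪ b n) = auxPhi a ∪ auxPhi b from rfl, symmDiff_self]
    exact hd_empty
  · intro a
    rw [show auxPhi (fun n => (a n)ᶜ) = (auxPhi a)ᶜ from rfl, symmDiff_self]
    exact hd_empty
  · intro a b h n
    rw [phi_symmDiff] at h
    exact hd_of_phi _ h n
end

section
/- For every ultrafilter U on ℕ containing no set of asymptotic density zero, and for every ε > 0, there exists A ∈ U with d*(A) < ε. -/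
open Filter Topology MeasureTheory
open scoped symmDiff

/-- Lemma 3: every ultrafilter on `ℕ` containing no set of asymptotic density zero
contains sets of arbitrarily small upper density. -/
theorem exists_small_upperDensity_mem
    (U : Ultrafilter ℕ) (hU : ∀ A : Set ℕ, A ∈ U → ¬ HasDensity A 0)
    (ε : ℝ) (hε : 0 < ε) :
    ∃ A ∈ U, upperDensity A < ε := by
  obtain ⟨k, hk⟩ := exists_nat_gt (2 / ε)
  have hk0 : (0 : ℝ) < k := lt_trans (by positivity) hk
  have hkn : 0 < k := by exact_mod_cast hk0
  have hcover : (⋃ r ∈ Set.Iio k, {x : ℕ | x % k = r}) ∈ U := by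
    refine Filter.mem_of_superset Filter.univ_mem fun x _ => ?_
    simp [Nat.mod_lt x hkn]
  obtain ⟨r, -, hr⟩ := (Ultrafilter.finite_biUnion_mem_iff (Set.finite_Iio k)).1 hcover
  refine ⟨_, hr, ?_⟩
  have hlt : 2 / (k : ℝ) < ε := by
    rw [div_lt_iff₀ hε] at hk
    rw [div_lt_iff₀ hk0]
    linarith
  refine lt_of_le_of_lt ?_ hlt
  unfold upperDensity
  refine Filter.limsup_le_of_le ?_ ?_
  · refine Filter.IsCoboundedUnder.of_frequently_ge (a := 0) ?_
    exact Filter.Frequently.of_forall fun n => by positivity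
  · filter_upwards [Filter.eventually_ge_atTop k] with n hn
    have hcard : ({x : ℕ | x % k = r} ∩ Set.Iio n).ncard ≤ n / k + 1 := by
      have h1 := Set.ncard_le_ncard_of_injOn (s := {x : ℕ | x % k = r} ∩ Set.Iio n)
        (t := Set.Iio (n / k + 1)) (fun x => x / k)
        (by
          rintro x ⟨-, hx⟩
          exact Nat.lt_succ_of_le (Nat.div_le_div_right (le_of_lt hx)))
        (by
          rintro x ⟨hx, -⟩ y ⟨hy, -⟩ hxy
          simp only [Set.mem_ofPred_eq] at hx hy hxy
          rw [← Nat.div_add_mod x k, ← Nat.div_add_mod y k, hx, hy, hxy])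
        (Set.finite_Iio _)
      simpa [Set.ncard_eq_toFinset_card'] using h1
    have hn' : (k : ℝ) ≤ n := by exact_mod_cast hn
    have hn0 : (0 : ℝ) < n := lt_of_lt_of_le hk0 hn'
    have h2 : (({x : ℕ | x % k = r} ∩ Set.Iio n).ncard : ℝ) ≤ (n : ℝ) / k + 1 := by
      refine le_trans (by exact_mod_cast hcard : _ ≤ (((n / k : ℕ) : ℝ) + 1)) ?_
      gcongr
      exact Nat.cast_div_le
    have h3 : (1 : ℝ) ≤ n / k := (one_le_div hk0).2 hn'
    rw [div_le_iff₀ hn0]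
    have h4 : 2 / (k : ℝ) * n = n / k + n / k := by ring
    linarith
end

section
/- The Stone space of 𝒫(ℕ)/Δ_d has a weak P-point: there exists an ultrafilter U on ℕ containing no set of asymptotic density zero such that for every sequence (U_n)_{n∈ℕ} of ultrafilters on ℕ, each containing no set of asymptotic density zero and each distinct from U, there exists A ∈ U with A ∉ U_n for every n ∈ ℕ. -/
open Filter Topology MeasureTheory
open scoped symmDiff

namespace WeakPPoint

open Cardinal

/-! ### The ideal of density zero sets -/

lemma hasDensity_mono {A B : Set ℕ} (hB : HasDensity B 0) (h : A ⊆ B) : HasDensity A 0 := by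
  unfold HasDensity at *
  refine squeeze_zero (fun n => by positivity) (fun n => ?_) hB
  gcongr
  exact (Set.finite_Iio n).subset Set.inter_subset_right

lemma hasDensity_union {A B : Set ℕ} (hA : HasDensity A 0) (hB : HasDensity B 0) :
    HasDensity (A ∪ B) 0 := by
  unfold HasDensity at *
  have h := hA.add hB
  rw [add_zero] at h
  refine squeeze_zero (fun n => by positivity) (fun n => ?_) h
  rw [← add_div]
  gcongr
  rw [Set.union_inter_distrib_right]
  exact_mod_cast Set.ncard_union_le _ _

lemma hasDensity_of_finite {A : Set ℕ} (hA : A.Finite) : HasDensity A 0 := by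
  unfold HasDensity
  refine squeeze_zero (fun n => by positivity) (fun n => ?_)
    (tendsto_const_div_atTop_nhds_zero_nat (A.ncard : ℝ))
  gcongr
  exact Set.inter_subset_left

lemma not_hasDensity_of_infinite {L : Set ℕ} (hL : L.Infinite) :
    ¬ HasDensity {m | Nat.log 2 m ∈ L} 0 := by
  intro h
  unfold HasDensity at h
  have h2 := h.eventually (gt_mem_nhds (show (0 : ℝ) < 1 / 2 by norm_num))
  obtain ⟨N, hN⟩ := eventually_atTop.1 h2
  obtain ⟨l, hl, hlN⟩ := hL.exists_gt N
  have hpow : N ≤ 2 ^ (l + 1) := by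
    have := Nat.lt_two_pow_self (n := l + 1)
    omega
  have h3 := hN _ hpow
  have hsub : ((Finset.Ico (2 ^ l) (2 ^ (l + 1)) : Finset ℕ) : Set ℕ) ⊆
      {m | Nat.log 2 m ∈ L} ∩ Set.Iio (2 ^ (l + 1)) := by
    intro m hm
    simp only [Finset.coe_Ico, Set.mem_Ico] at hm
    refine ⟨?_, hm.2⟩
    have : Nat.log 2 m = l := (Nat.log_eq_iff (Or.inr ⟨by norm_num, by
      have := Nat.pos_of_neZero (2 ^ l); omega⟩)).2 hm
    simpa [this] using hl
  have hcard := Set.ncard_le_ncard hsub ((Set.finite_Iio _).subset Set.inter_subset_right)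
  rw [Set.ncard_coe_finset, Nat.card_Ico] at hcard
  have h4 : 2 ^ l ≤ ({m | Nat.log 2 m ∈ L} ∩ Set.Iio (2 ^ (l + 1))).ncard := by
    have : 2 ^ (l + 1) - 2 ^ l = 2 ^ l := by rw [pow_succ]; omega
    omega
  have h5 : (2 : ℝ) ^ l ≤ (({m | Nat.log 2 m ∈ L} ∩ Set.Iio (2 ^ (l + 1))).ncard : ℝ) := by
    exact_mod_cast h4
  have hp : (0 : ℝ) < 2 ^ l := by positivity
  rw [div_lt_iff₀ (by positivity)] at h3
  push_cast at h3
  have hpw : (2 : ℝ) ^ (l + 1) = 2 * 2 ^ l := by ring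
  linarith

/-- The filter dual to the density zero ideal. -/
def base : Filter ℕ :=
  Filter.comk (fun A => HasDensity A 0) (hasDensity_of_finite Set.finite_empty)
    (fun _ ht _ hs => hasDensity_mono ht hs) (fun _ hs _ ht => hasDensity_union hs ht)

lemma mem_base {A : Set ℕ} : A ∈ base ↔ HasDensity Aᶜ 0 := Iff.rfl

lemma base_le_cofinite : base ≤ cofinite := by
  intro A hA
  exact hasDensity_of_finite (mem_cofinite.1 hA)

/-! ### The independent linked family -/

open Classical in
/-- Restriction of a set to its first `k` elements. -/
noncomputable def restr (k : ℕ) (X : Set ℕ) : Finset (Fin k) :=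
  Finset.univ.filter (fun a => (a : ℕ) ∈ X)

lemma restr_injOn (s : Finset (Set ℕ)) :
    ∃ K, ∀ k ≥ K, Set.InjOn (restr k) (s : Set (Set ℕ)) := by
  have h : ∀ᶠ k in atTop, ∀ X ∈ s, ∀ Y ∈ s, restr k X = restr k Y → X = Y := by
    rw [Filter.eventually_all_finset]
    intro X _
    rw [Filter.eventually_all_finset]
    intro Y _
    by_cases hXY : X = Y
    · simp [hXY]
    · obtain ⟨a, ha⟩ : ∃ a, ¬ (a ∈ X ↔ a ∈ Y) := by
        by_contra hcon
        push Not at hcon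
        exact hXY (Set.ext hcon)
      filter_upwards [eventually_gt_atTop a] with k hk heq
      exfalso
      apply ha
      have := Finset.ext_iff.1 heq ⟨a, hk⟩
      simpa [restr] using this
  obtain ⟨K, hK⟩ := eventually_atTop.1 h
  exact ⟨K, fun k hk X hX Y hY => hK k hk X hX Y hY⟩

/-- Index set of the family. -/
abbrev S : Type := Σ k : ℕ, (Finset (Fin k) → Finset (Finset (Fin k)))

/-- The family on `S`. -/
def A0 (Y X : Set ℕ) (n : ℕ) : Set S :=
  {s | restr s.1 X ∈ s.2 (restr s.1 Y) ∧ (s.2 (restr s.1 Y)).card ≤ n}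

lemma finite_lt (K : ℕ) : {s : S | s.1 < K}.Finite := by
  have : {s : S | s.1 < K} = ⋃ k ∈ Set.Iio K, Set.range (Sigma.mk k) := by
    ext ⟨k, f⟩
    simp
  rw [this]
  exact (Set.finite_Iio K).biUnion (fun k _ => Set.finite_range _)

lemma A0_link (Y : Set ℕ) (s : Finset (Set ℕ)) (n : ℕ) (hn : n < s.card) :
    {x | ∀ X ∈ s, x ∈ A0 Y X n}.Finite := by
  classical
  obtain ⟨K, hK⟩ := restr_injOn s
  refine (finite_lt K).subset ?_
  rintro ⟨k, f⟩ hx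
  by_contra hk
  simp only [Set.mem_ofPred_eq, not_lt] at hk
  have hinj := hK k hk
  have hsub : s.image (restr k) ⊆ f (restr k Y) := by
    intro a ha
    obtain ⟨X, hX, rfl⟩ := Finset.mem_image.1 ha
    exact (hx X hX).1
  have hc := Finset.card_le_card hsub
  rw [Finset.card_image_of_injOn hinj] at hc
  obtain ⟨X, hX⟩ : s.Nonempty := Finset.card_pos.1 (by omega)
  have := (hx X hX).2
  simp only at this
  omega

lemma A0_indep (τ : Finset (Set ℕ)) (σ : Set ℕ → Finset (Set ℕ)) :
    {x | ∀ Y ∈ τ, ∀ X ∈ σ Y, x ∈ A0 Y X (σ Y).card}.Infinite := by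
  classical
  obtain ⟨K, hK⟩ := restr_injOn τ
  let g : (k : ℕ) → Finset (Fin k) → Finset (Finset (Fin k)) := fun k a =>
    (τ.filter (fun Y => restr k Y = a)).biUnion (fun Y => (σ Y).image (restr k))
  have hg : ∀ k ≥ K, ∀ Y ∈ τ, g k (restr k Y) = (σ Y).image (restr k) := by
    intro k hk Y hY
    have : τ.filter (fun Z => restr k Z = restr k Y) = {Y} := by
      ext Z
      simp only [Finset.mem_filter, Finset.mem_singleton]
      constructor
      · rintro ⟨hZ, h⟩
        exact hK k hk hZ hY h
      · rintro rfl
        exact ⟨hY, rfl⟩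
    simp only [g, this, Finset.singleton_biUnion]
  have hinj : Function.Injective (fun k : ℕ => (⟨k, g k⟩ : S)) := by
    intro a b h
    exact congrArg Sigma.fst h
  refine ((Set.Ici_infinite K).image hinj.injOn).mono ?_
  rintro _ ⟨k, hk, rfl⟩ Y hY X hX
  have h1 := hg k hk Y hY
  refine ⟨?_, ?_⟩
  · simp only [h1]
    exact Finset.mem_image_of_mem _ hX
  · simp only [h1]
    exact Finset.card_image_le

/-- An enumeration of `S`. -/
lemma exists_enum : Nonempty (ℕ ≃ S) := by
  have : Infinite S := Infinite.of_injective (fun k : ℕ => (⟨k, fun _ => ∅⟩ : S))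
    (fun a b h => congrArg Sigma.fst h)
  obtain ⟨h⟩ := nonempty_denumerable S
  exact ⟨(Denumerable.eqv S).symm⟩

/-- The enumeration. -/
noncomputable def enum : ℕ ≃ S := exists_enum.some

/-- The family on `ℕ`. -/
def A (Y X : Set ℕ) (n : ℕ) : Set ℕ := {m | enum (Nat.log 2 m) ∈ A0 Y X n}

lemma A_mono {Y X : Set ℕ} {n m : ℕ} (h : n ≤ m) : A Y X n ⊆ A Y X m :=
  fun _ hx => ⟨hx.1, hx.2.trans h⟩

lemma finite_preimage_log {L : Set ℕ} (hL : L.Finite) : {m | Nat.log 2 m ∈ L}.Finite := by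
  obtain ⟨b, hb⟩ := hL.bddAbove
  refine (Set.finite_Iio (2 ^ (b + 1))).subset ?_
  intro m hm
  have h1 : Nat.log 2 m ≤ b := hb hm
  have h2 := Nat.lt_pow_succ_log_self (b := 2) (by norm_num) m
  exact h2.trans_le (Nat.pow_le_pow_right (by norm_num) (by omega))

lemma A_link (Y : Set ℕ) (s : Finset (Set ℕ)) (n : ℕ) (hn : n < s.card) :
    {x | ∀ X ∈ s, x ∈ A Y X n}.Finite :=
  finite_preimage_log ((A0_link Y s n hn).preimage enum.injective.injOn)

/-- Basic sets. -/
def E (τ : Finset (Set ℕ)) (σ : Set ℕ → Finset (Set ℕ)) : Set ℕ :=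
  {x | ∀ Y ∈ τ, ∀ X ∈ σ Y, x ∈ A Y X (σ Y).card}

lemma E_pos (τ : Finset (Set ℕ)) (σ : Set ℕ → Finset (Set ℕ)) : ¬ HasDensity (E τ σ) 0 := by
  have h : (enum ⁻¹' {x | ∀ Y ∈ τ, ∀ X ∈ σ Y, x ∈ A0 Y X (σ Y).card}).Infinite := by
    refine (A0_indep τ σ).preimage ?_
    rw [enum.surjective.range_eq]
    exact Set.subset_univ _
  intro h3
  refine not_hasDensity_of_infinite h (hasDensity_mono h3 ?_)
  intro m hm Y hY X hX
  have hm2 : ∀ Y ∈ τ, ∀ X ∈ σ Y, enum (Nat.log 2 m) ∈ A0 Y X (σ Y).card := hm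
  exact hm2 Y hY X hX

/-- The family is independent linked modulo `F`, off `R`. -/
def Valid (F : Filter ℕ) (R : Set (Set ℕ)) : Prop :=
  ∀ τ σ, (∀ Y ∈ τ, Y ∉ R) → (E τ σ)ᶜ ∉ F

lemma valid_base : Valid base ∅ := by
  intro τ σ _ h
  rw [mem_base, compl_compl] at h
  exact E_pos τ σ h

/-- The task given by `B` has been completed. -/
def Done (F : Filter ℕ) (B : ℕ → Set ℕ) : Prop :=
  (∃ n, {x | ∀ m < n, x ∈ B m}ᶜ ∈ F) ∨
  ∃ D : Set ℕ → Set ℕ, (∀ X, D X ∈ F) ∧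
    ∀ s : Finset (Set ℕ), ∀ m < s.card, {x | (∀ X ∈ s, x ∈ D X) ∧ x ∉ B m}.Finite

lemma Done.mono {F G : Filter ℕ} {B : ℕ → Set ℕ} (h : Done F B) (hG : G ≤ F) : Done G B := by
  rcases h with ⟨n, hn⟩ | ⟨D, hD, h⟩
  · exact Or.inl ⟨n, hG hn⟩
  · exact Or.inr ⟨D, fun X => hG (hD X), h⟩

lemma step (F : Filter ℕ) (R : Set (Set ℕ)) (B : ℕ → Set ℕ) (hF : F ≤ cofinite)
    (hR : ∃ i, i ∉ R) (hv : Valid F R) :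
    ∃ p : Filter ℕ × Finset (Set ℕ), p.1 ≤ F ∧ Valid p.1 (R ∪ (p.2 : Set (Set ℕ))) ∧
      Done p.1 B := by
  classical
  by_cases hG : Valid (F ⊓ ⨅ m, 𝓟 (B m)) R
  · obtain ⟨i, hi⟩ := hR
    set G := F ⊓ ⨅ m, 𝓟 (B m) with hGdef
    have hBG : ∀ m, B m ∈ G := fun m =>
      (inf_le_right.trans (iInf_le _ m) : G ≤ 𝓟 (B m)) (mem_principal_self _)
    let ν : ℕ → ℕ := fun x => Nat.findGreatest (fun n => ∀ m < n, x ∈ B m) x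
    have hνG : ∀ k, {x | k ≤ ν x} ∈ G := by
      intro k
      have h1 : {x : ℕ | k ≤ x} ∈ G := by
        apply (inf_le_left.trans hF : G ≤ cofinite)
        rw [Nat.cofinite_eq_atTop]
        exact eventually_ge_atTop k
      have h2 : ∀ᶠ x in G, ∀ m ∈ Finset.range k, x ∈ B m := by
        rw [Filter.eventually_all_finset]
        intro m _
        exact hBG m
      filter_upwards [h1, h2] with x hx1 hx2
      exact Nat.le_findGreatest hx1 (fun m hm => hx2 m (Finset.mem_range.2 hm))
    have hνB : ∀ x m, m < ν x → x ∈ B m := by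
      intro x m hm
      have := Nat.findGreatest_spec (P := fun n => ∀ m < n, x ∈ B m) (m := 0) (n := x)
        (Nat.zero_le _) (by simp)
      exact this m hm
    let D : Set ℕ → Set ℕ := fun X => {x | x ∈ A i X (ν x)}
    refine ⟨(G ⊓ ⨅ X, 𝓟 (D X), {i}), inf_le_left.trans inf_le_left, ?_, Or.inr ⟨D, ?_, ?_⟩⟩
    · intro τ σ hτ hE
      obtain ⟨g, hg, d, hd, hgd⟩ := mem_inf_iff_superset.1 hE
      obtain ⟨t, ht, htd⟩ := (hasBasis_iInf_principal_finite D).mem_iff.1 hd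
      lift t to Finset (Set ℕ) using ht
      have hiτ : i ∉ τ := fun h => hτ i h (by simp)
      refine hG (insert i τ) (Function.update σ i t) ?_ ?_
      · intro Y hY
        rcases Finset.mem_insert.1 hY with rfl | hY
        · exact hi
        · exact fun h => hτ Y hY (Or.inl h)
      · filter_upwards [hg, hνG t.card] with x hx hxν hxE
        refine hgd ⟨hx, htd ?_⟩ ?_
        · simp only [Set.mem_iInter]
          intro X hX
          have := hxE i (Finset.mem_insert_self _ _)
          rw [Function.update_self] at this
          exact A_mono hxν (this X hX)
        · intro Y hY
          have := hxE Y (Finset.mem_insert_of_mem hY)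
          have hne : Y ≠ i := by
            rintro rfl
            exact hiτ hY
          rwa [Function.update_of_ne hne] at this
    · intro X
      exact (inf_le_right.trans (iInf_le _ X) : G ⊓ ⨅ X, 𝓟 (D X) ≤ 𝓟 (D X))
        (mem_principal_self _)
    · intro s m hm
      have : (⋃ n ∈ Set.Iic m, {x | ∀ X ∈ s, x ∈ A i X n}).Finite :=
        (Set.finite_Iic m).biUnion (fun n hn => A_link i s n (lt_of_le_of_lt hn hm))
      refine this.subset ?_
      rintro x ⟨hx, hxB⟩
      simp only [Set.mem_iUnion]
      refine ⟨ν x, ?_, hx⟩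
      by_contra h
      exact hxB (hνB x m (not_le.1 h))
  · unfold Valid at hG
    push Not at hG
    obtain ⟨τ, σ, hτ, hE⟩ := hG
    refine ⟨(F ⊓ 𝓟 (E τ σ), τ), inf_le_left, ?_, Or.inl ?_⟩
    · intro τ' σ' hτ' hE'
      rw [mem_inf_principal] at hE'
      refine hv (τ ∪ τ') (fun Y => if Y ∈ τ then σ Y else σ' Y) ?_ ?_
      · intro Y hY
        rcases Finset.mem_union.1 hY with hY | hY
        · exact hτ Y hY
        · exact fun h => hτ' Y hY (Or.inl h)
      · filter_upwards [hE'] with x hx hxE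
        refine hx ?_ ?_
        · intro Y hY
          have := hxE Y (Finset.mem_union_left _ hY)
          simpa only [hY, if_true] using this
        · intro Y hY
          have hn : Y ∉ τ := fun h => hτ' Y hY (Or.inr h)
          have := hxE Y (Finset.mem_union_right _ hY)
          simpa only [hn, if_false] using this
    · obtain ⟨g, hg, d, hd, hgd⟩ := mem_inf_iff_superset.1 hE
      obtain ⟨t, ht, htd⟩ := (hasBasis_iInf_principal_finite B).mem_iff.1 hd
      obtain ⟨n, hn⟩ := ht.bddAbove
      refine ⟨n + 1, ?_⟩
      change _ ∈ F ⊓ 𝓟 (E τ σ)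
      rw [mem_inf_principal]
      filter_upwards [hg] with x hx hxE hxB
      refine hgd ⟨hx, htd ?_⟩ hxE
      simp only [Set.mem_iInter]
      intro m hm
      exact hxB m (Nat.lt_succ_of_le (hn hm))

lemma transfinite {T : Type} [LinearOrder T] [WellFoundedLT T]
    (hT : ∀ t : T, #(Set.Iio t) < 𝔠) (task : T → ℕ → Set ℕ) :
    ∃ F : T → Filter ℕ, (∀ s t, s ≤ t → F t ≤ F s) ∧ (∀ t, F t ≤ base) ∧ (∀ t, (F t).NeBot) ∧
      ∀ t, Done (F t) (task t) := by
  classical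
  have hstep : ∀ (B : ℕ → Set ℕ) (F : Filter ℕ) (R : Set (Set ℕ)),
      ∃ p : Filter ℕ × Finset (Set ℕ), p.1 ≤ F ∧
        (F ≤ cofinite → (∃ i, i ∉ R) → Valid F R →
          Valid p.1 (R ∪ (p.2 : Set (Set ℕ))) ∧ Done p.1 B) := by
    intro B F R
    by_cases h : F ≤ cofinite ∧ (∃ i, i ∉ R) ∧ Valid F R
    · obtain ⟨p, h1, h2⟩ := step F R B h.1 h.2.1 h.2.2
      exact ⟨p, h1, fun _ _ _ => h2⟩
    · exact ⟨(F, ∅), le_rfl, fun h1 h2 h3 => absurd ⟨h1, h2, h3⟩ h⟩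
  choose next hnext1 hnext2 using hstep
  let st : T → Filter ℕ × Finset (Set ℕ) := (wellFounded_lt (α := T)).fix (fun t f =>
    next (task t) (base ⊓ ⨅ s, ⨅ h : s < t, (f s h).1)
      (⋃ s, ⋃ h : s < t, ((f s h).2 : Set (Set ℕ))))
  let P : T → Filter ℕ := fun t => base ⊓ ⨅ s, ⨅ _ : s < t, (st s).1
  let Q : T → Set (Set ℕ) := fun t => ⋃ s, ⋃ _ : s < t, ((st s).2 : Set (Set ℕ))
  have hst : ∀ t, st t = next (task t) (P t) (Q t) := fun t =>
    (wellFounded_lt (α := T)).fix_eq _ t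
  have hP : ∀ t, (st t).1 ≤ P t := by
    intro t
    rw [hst t]
    exact hnext1 _ _ _
  have hlt : ∀ s t, s < t → (st t).1 ≤ (st s).1 := fun s t h =>
    (hP t).trans (inf_le_right.trans (iInf₂_le s h))
  have hle : ∀ s t, s ≤ t → (st t).1 ≤ (st s).1 := by
    intro s t h
    rcases h.lt_or_eq with h | rfl
    · exact hlt s t h
    · exact le_rfl
  have hbase : ∀ t, (st t).1 ≤ base := fun t => (hP t).trans inf_le_left
  have hQ : ∀ t, ∃ i, i ∉ Q t := by
    intro t
    have hc : #(Q t) < 𝔠 := by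
      have hQt : Q t = ⋃ s : Set.Iio t, ((st s.1).2 : Set (Set ℕ)) := by
        simp only [Q]
        rw [Set.iUnion_subtype]
        rfl
      rw [hQt]
      refine (mk_iUnion_le_sum_mk).trans_lt ?_
      refine (sum_le_sum _ (fun _ => ℵ₀) (fun s => ?_)).trans_lt ?_
      · exact ((st s.1).2.finite_toSet.lt_aleph0).le
      · rw [sum_const', mul_comm]
        exact mul_lt_of_lt aleph0_le_continuum aleph0_lt_continuum (hT t)
    by_contra hcon
    push Not at hcon
    have : Q t = Set.univ := Set.eq_univ_of_forall hcon
    rw [this, mk_univ, mk_set, mk_nat, two_power_aleph0] at hc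
    exact lt_irrefl _ hc
  have hQsub : ∀ s t, s < t → Q s ∪ ((st s).2 : Set (Set ℕ)) ⊆ Q t := by
    rintro s t h Y (hY | hY)
    · simp only [Q, Set.mem_iUnion] at hY ⊢
      obtain ⟨r, hr, hY⟩ := hY
      exact ⟨r, hr.trans h, hY⟩
    · simp only [Q, Set.mem_iUnion]
      exact ⟨s, h, hY⟩
  have hmain : ∀ t, Valid (P t) (Q t) := by
    intro t
    induction t using WellFoundedLT.induction with
    | _ t ih =>
      intro τ σ hτ hE
      by_cases hne : Nonempty (Set.Iio t)
      · have hPt : P t = ⨅ s : Set.Iio t, (st s.1).1 := by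
          simp only [P]
          rw [iInf_subtype]
          refine inf_eq_right.2 ?_
          obtain ⟨s, hs⟩ := hne
          exact (iInf₂_le s hs).trans (hbase s)
        rw [hPt, mem_iInf_of_directed] at hE
        · obtain ⟨⟨s, hs⟩, hE⟩ := hE
          have hv : Valid (st s).1 (Q s ∪ ((st s).2 : Set (Set ℕ))) := by
            rw [hst s]
            exact (hnext2 (task s) (P s) (Q s) (inf_le_left.trans base_le_cofinite) (hQ s)
              (ih s hs)).1
          exact hv τ σ (fun Y hY h => hτ Y hY (hQsub s t hs h)) hE
        · intro a b
          rcases le_total a b with h | h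
          · exact ⟨b, hle _ _ h, le_rfl⟩
          · exact ⟨a, le_rfl, hle _ _ h⟩
      · have hPt : P t = base := by
          simp only [P]
          refine inf_eq_left.2 (le_iInf₂ fun s hs => ?_)
          exact absurd ⟨⟨s, hs⟩⟩ hne
        rw [hPt] at hE
        exact valid_base τ σ (fun _ _ h => h) hE
  have hall : ∀ t, Valid (st t).1 (Q t ∪ ((st t).2 : Set (Set ℕ))) ∧ Done (st t).1 (task t) := by
    intro t
    rw [hst t]
    exact hnext2 (task t) (P t) (Q t) (inf_le_left.trans base_le_cofinite) (hQ t) (hmain t)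
  refine ⟨fun t => (st t).1, hle, hbase, fun t => ⟨fun hbot => ?_⟩, fun t => (hall t).2⟩
  refine (hall t).1 ∅ (fun _ => ∅) (by simp) ?_
  have hbot2 : (st t).1 = ⊥ := hbot
  rw [hbot2]
  exact mem_bot

lemma exists_ultrafilter : ∃ U : Ultrafilter ℕ, (U : Filter ℕ) ≤ base ∧
    ∀ B : ℕ → Set ℕ, Done U B := by
  have hcard : #(ℕ → Set ℕ) = 𝔠 := by simp
  obtain ⟨e⟩ : Nonempty ((𝔠 : Cardinal.{0}).ord.ToType ≃ (ℕ → Set ℕ)) := by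
    rw [← Cardinal.eq, hcard, mk_ord_toType]
  obtain ⟨F, h1, h2, h3, h4⟩ := transfinite
    (T := (𝔠 : Cardinal.{0}).ord.ToType) (fun t => by
      have := mk_Iio_lt t (by simp)
      simpa using this) e
  have : Nonempty (𝔠 : Cardinal.{0}).ord.ToType := ⟨e.symm (fun _ => ∅)⟩
  have hdir : Directed (· ≥ ·) F := by
    intro a b
    rcases le_total a b with h | h
    · exact ⟨b, h1 _ _ h, le_rfl⟩
    · exact ⟨a, le_rfl, h1 _ _ h⟩
  have : (⨅ t, F t).NeBot := iInf_neBot_of_directed' hdir h3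
  let U := Ultrafilter.of (⨅ t, F t)
  have hU : ∀ t, (U : Filter ℕ) ≤ F t := fun t => (Ultrafilter.of_le _).trans (iInf_le _ t)
  refine ⟨U, (hU (e.symm (fun _ => ∅))).trans (h2 _), fun B => ?_⟩
  have := (h4 (e.symm B)).mono (hU _)
  rwa [e.apply_symm_apply] at this

lemma mem_of_avoid {V : Ultrafilter ℕ} (hV : ∀ A : Set ℕ, A ∈ V → ¬ HasDensity A 0)
    {B : Set ℕ} (hB : B ∉ V) {D : Set ℕ → Set ℕ} {m : ℕ}
    (hD : ∀ s : Finset (Set ℕ), m < s.card → {x | (∀ X ∈ s, x ∈ D X) ∧ x ∉ B}.Finite) :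
    {X | D X ∈ V}.Finite := by
  by_contra hinf
  obtain ⟨s, hs, hcard⟩ := Set.Infinite.exists_subset_card_eq hinf (m + 1)
  refine hV _ ?_ (hasDensity_of_finite (hD s (by omega)))
  have h1 : ∀ᶠ x in (V : Filter ℕ), ∀ X ∈ s, x ∈ D X := by
    rw [Filter.eventually_all_finset]
    intro X hX
    exact hs hX
  have h2 : ∀ᶠ x in (V : Filter ℕ), x ∉ B := Ultrafilter.compl_mem_iff_notMem.2 hB
  exact h1.and h2

end WeakPPoint

open WeakPPoint in
/-- Theorem 1: the Stone space of `𝒫(ℕ)/Δ_d` has a weak P-point.  Points of this Stone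
space are ultrafilters on `ℕ` containing no set of asymptotic density zero. -/
theorem exists_weak_P_point_density :
    ∃ U : Ultrafilter ℕ,
      (∀ A : Set ℕ, A ∈ U → ¬ HasDensity A 0) ∧
      ∀ V : ℕ → Ultrafilter ℕ,
        (∀ n : ℕ, (∀ A : Set ℕ, A ∈ V n → ¬ HasDensity A 0) ∧ V n ≠ U) →
        ∃ A ∈ U, ∀ n : ℕ, A ∉ V n := by
  obtain ⟨U, hbase, hU⟩ := exists_ultrafilter
  refine ⟨U, ?_, ?_⟩
  · intro A hA h
    have : Aᶜ ∈ U := hbase (by rw [mem_base, compl_compl]; exact h)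
    exact Ultrafilter.compl_mem_iff_notMem.1 this hA
  · intro V hV
    have hZ : ∀ n, ∃ Z ∈ U, Z ∉ V n := by
      intro n
      by_contra hcon
      push Not at hcon
      exact (hV n).2 (Ultrafilter.coe_le_coe.1 (fun Z hZ => hcon Z hZ))
    choose B hBU hBV using hZ
    rcases hU B with ⟨n, hn⟩ | ⟨D, hDU, hD⟩
    · exfalso
      refine Ultrafilter.compl_mem_iff_notMem.1 hn ?_
      have : ∀ᶠ x in (U : Filter ℕ), ∀ m ∈ Finset.range n, x ∈ B m := by
        rw [Filter.eventually_all_finset]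
        intro m _
        exact hBU m
      filter_upwards [this] with x hx m hm
      exact hx m (Finset.mem_range.2 hm)
    · have hcount : (⋃ n, {X | D X ∈ V n}).Countable :=
        Set.countable_iUnion fun n =>
          (mem_of_avoid (hV n).1 (hBV n) (fun s hs => hD s n hs)).countable
      have : ∃ X, X ∉ ⋃ n, {X | D X ∈ V n} := by
        by_contra hcon
        push Not at hcon
        rw [Set.eq_univ_of_forall hcon, Set.countable_univ_iff,
          ← Cardinal.mk_le_aleph0_iff] at hcount
        simp only [Cardinal.mk_set, Cardinal.mk_nat] at hcount
        exact absurd hcount (not_le.2 (Cardinal.cantor _))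
      obtain ⟨X, hX⟩ := this
      simp only [Set.mem_iUnion, not_exists] at hX
      exact ⟨D X, hDU X, hX⟩
end

section
/- Let D be a Boolean algebra and let B be a Boolean subalgebra of D such that for every c ∈ D, the ideal {a ∈ B : a ≤ c} of B is countably generated and the filter {b ∈ B : c ≤ b} of B is countably generated. Let C be the Boolean subalgebra of D generated by B together with a countable set S ⊆ D. Then for every c ∈ D, the ideal {a ∈ C : a ≤ c} of C is countably generated and the filter {b ∈ C : c ≤ b} of C is countably generated. -/
/-- `B` is (the carrier of) a Boolean subalgebra of `D`. -/
def IsBoolSubalgebra {D : Type*} [BooleanAlgebra D] (B : Set D) : Prop :=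
  ⊥ ∈ B ∧ ⊤ ∈ B ∧ (∀ a ∈ B, ∀ b ∈ B, a ⊔ b ∈ B) ∧ (∀ a ∈ B, ∀ b ∈ B, a ⊓ b ∈ B) ∧
    ∀ a ∈ B, aᶜ ∈ B

/-- The Boolean subalgebra of `D` generated by a set `X`: the intersection of all
Boolean subalgebras containing `X`. -/
def boolSubalgClosure {D : Type*} [BooleanAlgebra D] (X : Set D) : Set D :=
  ⋂₀ {B : Set D | IsBoolSubalgebra B ∧ X ⊆ B}

/-- The ideal `{a ∈ B : a ≤ c}` of `B` is countably generated. -/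
def CountablyGeneratedIdeal {D : Type*} [BooleanAlgebra D] (B : Set D) (c : D) : Prop :=
  ∃ G : Set D, G.Countable ∧ (∀ g ∈ G, g ∈ B ∧ g ≤ c) ∧
    ∀ a ∈ B, a ≤ c → ∃ t : Finset D, ↑t ⊆ G ∧ a ≤ t.sup id

/-- The filter `{b ∈ B : c ≤ b}` of `B` is countably generated. -/
def CountablyGeneratedFilter {D : Type*} [BooleanAlgebra D] (B : Set D) (c : D) : Prop :=
  ∃ G : Set D, G.Countable ∧ (∀ g ∈ G, g ∈ B ∧ c ≤ g) ∧
    ∀ b ∈ B, c ≤ b → ∃ t : Finset D, ↑t ⊆ G ∧ t.inf id ≤ b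

theorem gap_ideal_aux {D : Type*} [BooleanAlgebra D] (B : Set D) (hB : IsBoolSubalgebra B)
    (S : Set D) (hS : S.Countable)
    (hgap : ∀ c : D, CountablyGeneratedIdeal B c) (c : D) :
    CountablyGeneratedIdeal (boolSubalgClosure (B ∪ S)) c := by
  classical
  obtain ⟨hbot, htop, hsup, hinf, hcompl⟩ := hB
  set C := boolSubalgClosure (B ∪ S) with hC
  have hBC : B ⊆ C := fun x hx A hA => hA.2 (Or.inl hx)
  have hSC : S ⊆ C := fun x hx A hA => hA.2 (Or.inr hx)
  have Ctop : ⊤ ∈ C := fun A hA => hA.1.2.1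
  have Cinf : ∀ a ∈ C, ∀ b ∈ C, a ⊓ b ∈ C :=
    fun a ha b hb A hA => hA.1.2.2.2.1 a (ha A hA) b (hb A hA)
  have Ccompl : ∀ a ∈ C, aᶜ ∈ C := fun a ha A hA => hA.1.2.2.2.2 a (ha A hA)
  let L : Set D := S ∪ compl '' S
  have hL : L.Countable := hS.union (hS.image _)
  have hLC : L ⊆ C := by
    rintro x (hx | ⟨y, hy, rfl⟩)
    · exact hSC hx
    · exact Ccompl _ (hSC hy)
  -- finite meets of literals
  let T : Set D := (fun F : Finset D => F.inf id) '' {F : Finset D | (F : Set D) ⊆ L}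
  have hT : T.Countable := by
    refine Set.Countable.image ?_ _
    have h1 := Set.countable_setOf_finite_subset hL
    have h2 := h1.preimage_of_injOn (f := fun F : Finset D => (F : Set D))
      (Finset.coe_injective.injOn)
    refine h2.mono ?_
    intro F hF
    exact ⟨F.finite_toSet, hF⟩
  have Ttop : ⊤ ∈ T := ⟨∅, by simp, by simp⟩
  have TL : L ⊆ T := fun x hx => ⟨{x}, by simpa using hx, by simp⟩
  have Tinf : ∀ a ∈ T, ∀ b ∈ T, a ⊓ b ∈ T := by
    rintro _ ⟨F, hF, rfl⟩ _ ⟨F', hF', rfl⟩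
    refine ⟨F ∪ F', ?_, Finset.inf_union⟩
    simp only [Set.mem_setOf_eq, Finset.coe_union]
    exact Set.union_subset hF hF'
  have TC : T ⊆ C := by
    rintro _ ⟨F, hF, rfl⟩
    exact Finset.inf_induction (p := fun x => x ∈ C) Ctop (fun a ha b hb => Cinf a ha b hb)
      (fun x hx => hLC (hF hx))
  let M : Set D := {x | ∃ b ∈ B, ∃ t ∈ T, x = b ⊓ t}
  have Minf : InfClosed M := by
    rintro _ ⟨b, hb, t, ht, rfl⟩ _ ⟨b', hb', t', ht', rfl⟩
    exact ⟨b ⊓ b', hinf _ hb _ hb', t ⊓ t', Tinf _ ht _ ht', inf_inf_inf_comm _ _ _ _⟩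
  have Jinf : InfClosed (supClosure M) := Minf.supClosure
  have Jsup : SupClosed (supClosure M) := supClosed_supClosure
  have BJ : B ⊆ supClosure M := fun b hb => subset_supClosure ⟨b, hb, ⊤, Ttop, by simp⟩
  have LJ : L ⊆ supClosure M := fun t ht => subset_supClosure ⟨⊤, htop, t, TL ht, by simp⟩
  have CJ : C ⊆ supClosure M := by
    intro x hx
    have : x ∈ {y | y ∈ supClosure M ∧ yᶜ ∈ supClosure M} := by
      refine hx _ ⟨⟨?_, ?_, ?_, ?_, ?_⟩, ?_⟩
      · exact ⟨BJ hbot, by simpa using BJ htop⟩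
      · exact ⟨BJ htop, by simpa using BJ hbot⟩
      · intro a ha b hb
        exact ⟨Jsup ha.1 hb.1, by rw [compl_sup]; exact Jinf ha.2 hb.2⟩
      · intro a ha b hb
        exact ⟨Jinf ha.1 hb.1, by rw [compl_inf]; exact Jsup ha.2 hb.2⟩
      · intro a ha
        exact ⟨ha.2, by simpa using ha.1⟩
      · rintro y (hy | hy)
        · exact ⟨BJ hy, BJ (hcompl _ hy)⟩
        · exact ⟨LJ (Or.inl hy), LJ (Or.inr ⟨y, hy, rfl⟩)⟩
    exact this.1
  choose G hGc hG hGgen using hgap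
  refine ⟨⋃ t ∈ T, (fun g => g ⊓ t) '' G (c ⊔ tᶜ),
    hT.biUnion fun t _ => (hGc _).image _, ?_, ?_⟩
  · intro g hg
    simp only [Set.mem_iUnion] at hg
    obtain ⟨t, ht, g, hg, rfl⟩ := hg
    refine ⟨Cinf _ (hBC (hG _ _ hg).1) _ (TC ht), ?_⟩
    have := (hG _ _ hg).2
    rwa [← himp_eq, le_himp_iff] at this
  · intro a ha
    refine supClosure_min (t := {a | a ≤ c → ∃ u : Finset D,
      ↑u ⊆ (⋃ t ∈ T, (fun g => g ⊓ t) '' G (c ⊔ tᶜ)) ∧ a ≤ u.sup id}) ?_ ?_ (CJ ha)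
    · rintro _ ⟨b, hb, t, ht, rfl⟩ hle
      have hle' : b ≤ c ⊔ tᶜ := by
        rwa [← himp_eq, le_himp_iff]
      obtain ⟨u, hu, hbu⟩ := hGgen _ b hb hle'
      refine ⟨u.image (fun g => g ⊓ t), ?_, ?_⟩
      · rw [Finset.coe_image]
        exact (Set.image_mono hu).trans
          (Set.subset_biUnion_of_mem (u := fun t => (fun g => g ⊓ t) '' G (c ⊔ tᶜ)) ht)
      · rw [Finset.sup_image]
        refine (inf_le_inf_right t hbu).trans ?_
        rw [Finset.sup_inf_distrib_right]
        exact le_rfl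
    · intro x hx y hy hle
      obtain ⟨u, hu, hxu⟩ := hx (le_sup_left.trans hle)
      obtain ⟨v, hv, hyv⟩ := hy (le_sup_right.trans hle)
      refine ⟨u ∪ v, ?_, ?_⟩
      · rw [Finset.coe_union]; exact Set.union_subset hu hv
      · rw [Finset.sup_union]; exact sup_le_sup hxu hyv

theorem gap_filter_of_ideal {D : Type*} [BooleanAlgebra D] (C : Set D)
    (hC : ∀ a ∈ C, aᶜ ∈ C) (c : D) (h : CountablyGeneratedIdeal C cᶜ) :
    CountablyGeneratedFilter C c := by
  classical
  obtain ⟨G, hGc, hG, hgen⟩ := h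
  refine ⟨compl '' G, hGc.image _, ?_, ?_⟩
  · rintro _ ⟨g, hg, rfl⟩
    exact ⟨hC _ (hG g hg).1, le_compl_comm.mp (hG g hg).2⟩
  · intro b hb hle
    obtain ⟨t, ht, hbt⟩ := hgen bᶜ (hC _ hb) (compl_le_compl hle)
    refine ⟨t.image compl, ?_, ?_⟩
    · rw [Finset.coe_image]; exact Set.image_mono ht
    · rw [Finset.inf_image]
      have h2 : (t.sup id)ᶜ = t.inf (id ∘ compl) := by
        rw [Finset.compl_sup]; rfl
      rw [← h2]
      exact compl_le_of_compl_le hbt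

/-- Lemma 6: if every `c ∈ D` determines a countably generated gap over the Boolean
subalgebra `B`, then every `c ∈ D` determines a countably generated gap over the
subalgebra generated by `B` together with a countable set `S`. -/
theorem countably_generated_gap_extension
    {D : Type*} [BooleanAlgebra D] (B : Set D) (hB : IsBoolSubalgebra B)
    (S : Set D) (hS : S.Countable)
    (hgap : ∀ c : D, CountablyGeneratedIdeal B c ∧ CountablyGeneratedFilter B c) :
    ∀ c : D, CountablyGeneratedIdeal (boolSubalgClosure (B ∪ S)) c ∧
      CountablyGeneratedFilter (boolSubalgClosure (B ∪ S)) c := by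
  intro c
  have h := gap_ideal_aux B hB S hS (fun c => (hgap c).1)
  exact ⟨h c, gap_filter_of_ideal _ (fun a ha A hA => hA.1.2.2.2.2 a (ha A hA)) c (h cᶜ)⟩
end

section
/- There exists a family (A_i)_{i ∈ I} of subsets of ℕ indexed by a set I of cardinality continuum (e.g., I = 𝒫(ℕ)) such that for every finite subset s ⊆ I and every function ε : s → {0,1}, the Boolean combination ⋂_{i∈s} A_i^{ε(i)} has asymptotic density exactly 2^{−|s|}, where A^0 = A and A^1 = ℕ∖A. In particular each A_i has asymptotic density 1/2 and the family is independent. -/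
open Filter Topology MeasureTheory
open scoped symmDiff

/-- Counting transfer along an almost-identity map. -/
lemma count_transfer (U V : Set ℕ) (N0 : ℕ) (φ : ℕ → ℕ)
    (h : ∀ n, N0 ≤ n → n ∈ U → φ n ∈ V ∧ φ n ≤ n + Nat.sqrt n ∧ φ (φ n) = n) (N : ℕ) :
    (U ∩ Set.Iio N).ncard ≤ (V ∩ Set.Iio N).ncard + (N0 + Nat.sqrt N) := by
  have hfin : ∀ M, (Set.Iio M : Set ℕ).Finite := fun M => Set.finite_Iio M
  have h1 : (U ∩ Set.Iio N).ncard ≤ (Set.Iio N0).ncard + (U ∩ Set.Ico N0 N).ncard := by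
    refine le_trans (Set.ncard_le_ncard ?_ ((hfin N0).union ((Set.finite_Ico N0 N).inter_of_right U)))
      (Set.ncard_union_le _ _)
    rintro n ⟨hn, hnN⟩
    by_cases h0 : n < N0
    · exact Or.inl h0
    · exact Or.inr ⟨hn, not_lt.mp h0, hnN⟩
  have h2 : (U ∩ Set.Ico N0 N).ncard ≤ ((V ∩ Set.Iio N) ∪ Set.Ico N (N + Nat.sqrt N)).ncard := by
    refine Set.ncard_le_ncard_of_injOn φ ?_ ?_
      (((hfin N).inter_of_right V).union (Set.finite_Ico _ _))
    · rintro n ⟨hn, hn0, hnN⟩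
      obtain ⟨a, b, -⟩ := h n hn0 hn
      by_cases hh : φ n < N
      · exact Or.inl ⟨a, hh⟩
      · refine Or.inr ⟨not_lt.mp hh, ?_⟩
        have := Nat.sqrt_le_sqrt (le_of_lt hnN)
        have h3 : n < N := hnN
        show φ n < N + Nat.sqrt N
        omega
    · rintro n ⟨hn, hn0, hnN⟩ m ⟨hm, hm0, hmN⟩ e
      have a := (h n hn0 hn).2.2
      have b := (h m hm0 hm).2.2
      rw [← a, ← b, e]
  have h3 := Set.ncard_union_le (V ∩ Set.Iio N) (Set.Ico N (N + Nat.sqrt N))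
  have h4 : (Set.Iio N0).ncard = N0 := by
    rw [← Finset.coe_Iio, Set.ncard_coe_finset]; simp
  have h5 : (Set.Ico N (N + Nat.sqrt N)).ncard = Nat.sqrt N := by
    rw [← Finset.coe_Ico, Set.ncard_coe_finset]; simp
  omega

lemma density_half (U V : Set ℕ) (p : ℝ) (N0 : ℕ) (φ : ℕ → ℕ) (hd : Disjoint U V)
    (hp : HasDensity (U ∪ V) p)
    (h1 : ∀ n, N0 ≤ n → n ∈ U → φ n ∈ V ∧ φ n ≤ n + Nat.sqrt n ∧ φ (φ n) = n)
    (h2 : ∀ n, N0 ≤ n → n ∈ V → φ n ∈ U ∧ φ n ≤ n + Nat.sqrt n ∧ φ (φ n) = n) :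
    HasDensity U (2⁻¹ * p) := by
  unfold HasDensity at *
  have hsum : ∀ N, ((U ∪ V) ∩ Set.Iio N).ncard
      = (U ∩ Set.Iio N).ncard + (V ∩ Set.Iio N).ncard := by
    intro N
    rw [Set.union_inter_distrib_right]
    exact Set.ncard_union_eq (hd.mono Set.inter_subset_left Set.inter_subset_left)
      ((Set.finite_Iio N).inter_of_right U) ((Set.finite_Iio N).inter_of_right V)
  have hsq : Tendsto (fun n : ℕ => (Nat.sqrt n : ℝ) / n) atTop (𝓝 0) := by
    have h : Tendsto (fun n : ℕ => (√(n:ℝ))⁻¹) atTop (𝓝 0) :=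
      tendsto_inv_atTop_zero.comp (Real.tendsto_sqrt_atTop.comp tendsto_natCast_atTop_atTop)
    refine squeeze_zero (fun n => by positivity) (fun n => ?_) h
    calc (Nat.sqrt n : ℝ) / n ≤ √(n:ℝ) / n := by gcongr; exact Real.nat_sqrt_le_real_sqrt
      _ = (√(n:ℝ))⁻¹ := Real.sqrt_div_self
  have herr : Tendsto (fun n : ℕ => ((N0 : ℝ) / n + (Nat.sqrt n : ℝ) / n)) atTop (𝓝 0) := by
    simpa using (tendsto_const_div_atTop_nhds_zero_nat (N0:ℝ)).add hsq
  have hdiff : Tendsto (fun n : ℕ => ((U ∩ Set.Iio n).ncard : ℝ) / n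
      - 2⁻¹ * ((((U ∪ V) ∩ Set.Iio n).ncard : ℝ) / n)) atTop (𝓝 0) := by
    refine squeeze_zero_norm (fun n => ?_) herr
    have a : ((U ∩ Set.Iio n).ncard : ℝ) ≤ (V ∩ Set.Iio n).ncard + (N0 + Nat.sqrt n) := by
      exact_mod_cast count_transfer U V N0 φ h1 n
    have b : ((V ∩ Set.Iio n).ncard : ℝ) ≤ (U ∩ Set.Iio n).ncard + (N0 + Nat.sqrt n) := by
      exact_mod_cast count_transfer V U N0 φ h2 n
    have c : (0:ℝ) ≤ N0 + Nat.sqrt n := by positivity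
    rw [hsum n, ← add_div, ← mul_div_assoc, ← sub_div, norm_div, Real.norm_natCast]
    gcongr
    push_cast
    rw [Real.norm_eq_abs, abs_le]
    constructor <;> linarith
  have := hdiff.add (hp.const_mul 2⁻¹)
  simpa using this

lemma exists_code : ∃ c : ℕ → Set ℕ → ℕ, (∀ l X, c l X ≤ l / 2) ∧
    ∀ X Y, X ≠ Y → ∃ l0, ∀ l, l0 ≤ l → c l X ≠ c l Y := by
  classical
  refine ⟨fun l X => ∑ i ∈ (Finset.range (Nat.log 2 (l/2))).filter (· ∈ X), 2 ^ i, ?_, ?_⟩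
  · intro l X
    by_cases h : l / 2 = 0
    · simp [h]
    · refine (Nat.geomSum_lt le_rfl ?_).le.trans (Nat.pow_log_le_self 2 h)
      intro k hk
      simpa using (Finset.mem_filter.mp hk).1
  · intro X Y hXY
    obtain ⟨x, hx⟩ : ∃ x, ¬ (x ∈ X ↔ x ∈ Y) := by
      by_contra hc
      push Not at hc
      exact hXY (Set.ext hc)
    refine ⟨2 * 2 ^ (x+1), fun l hl e => hx ?_⟩
    have hs := Finset.geomSum_injective (le_refl 2) e
    have hxl : x < Nat.log 2 (l/2) := by
      have : x + 1 ≤ Nat.log 2 (l/2) := by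
        apply Nat.le_log_of_pow_le (by norm_num)
        omega
      omega
    have := Finset.ext_iff.mp hs x
    simp only [Finset.mem_filter, Finset.mem_range, hxl, true_and] at this
    exact this

lemma xor_le_add_aux (a b : ℕ) : a ^^^ b ≤ a + b := by
  induction a using Nat.strong_induction_on generalizing b with
  | _ a ih =>
    by_cases h : a = 0
    · simp [h]
    · have h1 := ih (a / 2) (by omega) (b / 2)
      have h2 : (a ^^^ b) / 2 = a / 2 ^^^ b / 2 := Nat.xor_div_two
      have h3 : (a ^^^ b) % 2 = (a + b) % 2 := Nat.xor_mod_two_eq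
      omega

lemma flip_facts (n c : ℕ) (hn : 2 ≤ n) (hc : c ≤ Nat.log 2 n / 2) :
    Nat.log 2 (n ^^^ 2 ^ c) = Nat.log 2 n ∧ n ^^^ 2 ^ c ≤ n + Nat.sqrt n := by
  set l := Nat.log 2 n with hl
  have hl1 : 1 ≤ l := Nat.le_log_of_pow_le (by norm_num) (by simpa using hn)
  have h1 : 2 ^ l ≤ n := Nat.pow_log_le_self 2 (by omega)
  have h2 : n < 2 ^ (l+1) := Nat.lt_pow_succ_log_self (by norm_num) n
  have hcl : c < l := by omega
  have hb : n.testBit l = true := by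
    rw [Nat.testBit_eq_decide_div_mod_eq]
    have : n / 2 ^ l = 1 := by
      apply Nat.div_eq_of_lt_le
      · simpa using h1
      · rw [pow_succ] at h2; omega
    simp [this]
  constructor
  · apply Nat.log_eq_of_pow_le_of_lt_pow
    · apply Nat.ge_two_pow_of_testBit
      rw [Nat.testBit_xor, hb, Nat.testBit_two_pow_of_ne (by omega)]
      rfl
    · exact Nat.xor_lt_two_pow h2 (Nat.pow_lt_pow_right (by norm_num) (by omega))
  · have h3 : 2 ^ c ≤ Nat.sqrt n := by
      rw [Nat.le_sqrt, ← pow_add]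
      exact (Nat.pow_le_pow_right (by norm_num) (by omega)).trans h1
    have : n ^^^ 2 ^ c ≤ n + 2 ^ c := by
      exact xor_le_add_aux n _
    omega

/-- Lemma 9: there is an independent family of subsets of `ℕ`, indexed by `𝒫(ℕ)`
(a set of cardinality continuum), all of whose finite Boolean combinations
`⋂_{i∈s} A_i^{ε(i)}` have asymptotic density exactly `2^{-|s|}`.  (Here `A^0 = A` and
`A^1 = ℕ∖A`; in particular each `A_i` has density `1/2`, each combination is nonempty,
and the family is independent.) -/
theorem exists_independent_family_exact_density :
    ∃ A : Set ℕ → Set ℕ,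
      ∀ (s : Finset (Set ℕ)) (ε : Set ℕ → Bool),
        HasDensity (⋂ i ∈ s, if ε i then (A i)ᶜ else A i) ((2 : ℝ)⁻¹ ^ s.card) := by
  classical
  obtain ⟨c, hc, hcc⟩ := exists_code
  refine ⟨fun X => {n | n.testBit (c (Nat.log 2 n) X) = true}, fun s ε => ?_⟩
  have key : ∀ X n, (n ∈ (if ε X then {n : ℕ | n.testBit (c (Nat.log 2 n) X) = true}ᶜ
      else {n | n.testBit (c (Nat.log 2 n) X) = true})) ↔
      n.testBit (c (Nat.log 2 n) X) = !(ε X) := by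
    intro X n
    cases ε X <;> simp
  have conv : ∀ s : Finset (Set ℕ), (⋂ i ∈ s, if ε i then
      {n : ℕ | n.testBit (c (Nat.log 2 n) i) = true}ᶜ
      else {n | n.testBit (c (Nat.log 2 n) i) = true})
      = {n | ∀ i ∈ s, n.testBit (c (Nat.log 2 n) i) = !(ε i)} := by
    intro s
    ext n
    simp only [Set.mem_iInter, key, Set.mem_ofPred_eq]
  rw [conv]
  clear conv key
  induction s using Finset.induction_on with
  | empty =>
    unfold HasDensity
    simp only [Finset.notMem_empty, false_imp_iff, implies_true, Set.setOf_true, Set.univ_inter,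
      Finset.card_empty, pow_zero]
    refine tendsto_const_nhds.congr' ?_
    filter_upwards [eventually_gt_atTop 0] with n hn
    rw [← Finset.coe_Iio, Set.ncard_coe_finset]
    have : (n:ℝ) ≠ 0 := by positivity
    simp [this]
  | insert X s hX ih =>
    obtain ⟨L, hL⟩ : ∃ L, ∀ i ∈ s, ∀ l, L ≤ l → c l X ≠ c l i := by
      have : ∀ i, ∃ l0, i ∈ s → ∀ l, l0 ≤ l → c l X ≠ c l i := by
        intro i
        by_cases hi : i ∈ s
        · obtain ⟨l0, h⟩ := hcc X i (fun e => hX (e ▸ hi))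
          exact ⟨l0, fun _ => h⟩
        · exact ⟨0, fun h => absurd h hi⟩
      choose f hf using this
      exact ⟨s.sup f, fun i hi l hl => hf i hi l ((Finset.le_sup hi).trans hl)⟩
    rw [Finset.card_insert_of_notMem hX, pow_succ']
    have main : ∀ b : Bool, ∀ n, 2 ^ (L+1) ≤ n →
        ((∀ i ∈ s, n.testBit (c (Nat.log 2 n) i) = !(ε i)) ∧
          n.testBit (c (Nat.log 2 n) X) = b) →
        ((∀ i ∈ s, (n ^^^ 2 ^ c (Nat.log 2 n) X).testBit
            (c (Nat.log 2 (n ^^^ 2 ^ c (Nat.log 2 n) X)) i) = !(ε i)) ∧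
          (n ^^^ 2 ^ c (Nat.log 2 n) X).testBit
            (c (Nat.log 2 (n ^^^ 2 ^ c (Nat.log 2 n) X)) X) = !b) ∧
        (n ^^^ 2 ^ c (Nat.log 2 n) X) ≤ n + Nat.sqrt n ∧
        ((n ^^^ 2 ^ c (Nat.log 2 n) X) ^^^
          2 ^ c (Nat.log 2 (n ^^^ 2 ^ c (Nat.log 2 n) X)) X) = n := by
      rintro b n hn ⟨h1, h2⟩
      have hn2 : 2 ≤ n := by
        have : 2 ^ 1 ≤ 2 ^ (L+1) := Nat.pow_le_pow_right (by norm_num) (by omega)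
        omega
      have hlog : L ≤ Nat.log 2 n :=
        (Nat.le_succ L).trans (Nat.le_log_of_pow_le (by norm_num) hn)
      obtain ⟨e1, e2⟩ := flip_facts n (c (Nat.log 2 n) X) hn2 (hc _ _)
      rw [e1]
      refine ⟨⟨fun i hi => ?_, ?_⟩, e2, ?_⟩
      · rw [Nat.testBit_xor, h1 i hi, Nat.testBit_two_pow_of_ne (hL i hi _ hlog)]
        simp
      · rw [Nat.testBit_xor, h2, Nat.testBit_two_pow_self]
        simp
      · rw [Nat.xor_assoc, Nat.xor_self, Nat.xor_zero]
    have hset : {n : ℕ | ∀ i ∈ insert X s, n.testBit (c (Nat.log 2 n) i) = !(ε i)} =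
        {n : ℕ | (∀ i ∈ s, n.testBit (c (Nat.log 2 n) i) = !(ε i)) ∧
          n.testBit (c (Nat.log 2 n) X) = !(ε X)} := by
      ext n
      simp only [Finset.forall_mem_insert, Set.mem_ofPred_eq]
      tauto
    rw [hset]
    refine density_half _ {n : ℕ | (∀ i ∈ s, n.testBit (c (Nat.log 2 n) i) = !(ε i)) ∧
          n.testBit (c (Nat.log 2 n) X) = ε X} _ (2 ^ (L+1))
          (fun n => n ^^^ 2 ^ c (Nat.log 2 n) X) ?_ ?_ ?_ ?_
    · rw [Set.disjoint_left]
      rintro n ⟨-, h⟩ ⟨-, h'⟩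
      rw [h] at h'
      cases hε : ε X <;> simp [hε] at h'
    · convert ih using 1
      ext n
      simp only [Set.mem_union, Set.mem_ofPred_eq, ← and_or_left]
      refine and_iff_left ?_
      cases ε X <;> cases n.testBit (c (Nat.log 2 n) X) <;> simp
    · intro n hn h
      simpa using main _ n hn h
    · intro n hn h
      exact main _ n hn h
end

section
/- Let G = ∏_{x ∈ 𝒫(ℕ)} (ℤ/2ℤ) be the Cantor cube 2^𝔠 regarded as a compact topological group with the product topology, and let μ be its Haar probability measure. Then there exists a map Φ from the μ-measurable subsets of G to 𝒫(ℕ) such that: (i) for every μ-measurable A ⊆ G, the asymptotic density of Φ(A) exists and d(Φ(A)) = μ(A); (ii) for all μ-measurable A, B ⊆ G, the sets Φ(A ∩ B) Δ (Φ(A) ∩ Φ(B)) and Φ(A ∪ B) Δ (Φ(A) ∪ Φ(B)) and Φ(G∖A) Δ (ℕ∖Φ(A)) all have asymptotic density zero; (iii) if μ(A Δ B) > 0 then Φ(A) Δ Φ(B) has positive upper asymptotic density. Hence Φ induces a measure-preserving embedding of the measure algebra H(2^𝔠)/Δ_H of Haar-measurable sets modulo Haar-null sets into 𝒫(ℕ)/Δ_d.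 -/
open Filter Topology MeasureTheory
open scoped symmDiff

/-- The Cantor cube `2^𝔠`, realized as the product of `𝔠 = |𝒫(ℕ)|` many copies of the
two-element group `ℤ/2ℤ`, a compact topological group. -/
abbrev CantorCube : Type := Set ℕ → ZMod 2

noncomputable instance : MeasurableSpace CantorCube := borel _
instance : BorelSpace CantorCube := ⟨rfl⟩

noncomputable section

/-- counting function -/
def cnt (E : Set ℕ) (n : ℕ) : ℝ := ((E ∩ Set.Iio n).ncard : ℝ)

lemma cnt_nonneg (E : Set ℕ) (n : ℕ) : 0 ≤ cnt E n := Nat.cast_nonneg _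

lemma cnt_mono {E F : Set ℕ} {n : ℕ} (h : E ∩ Set.Iio n ⊆ F) : cnt E n ≤ cnt F n := by
  unfold cnt
  have : (E ∩ Set.Iio n).ncard ≤ (F ∩ Set.Iio n).ncard :=
    Set.ncard_le_ncard (fun x hx => ⟨h hx, hx.2⟩)
      ((Set.finite_Iio n).subset Set.inter_subset_right)
  exact_mod_cast this

lemma cnt_union (E F : Set ℕ) (n : ℕ) : cnt (E ∪ F) n ≤ cnt E n + cnt F n := by
  unfold cnt
  rw [Set.union_inter_distrib_right]
  exact_mod_cast Set.ncard_union_le _ _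

lemma cnt_Iio_le (T n : ℕ) : cnt (Set.Iio T) n ≤ T := by
  unfold cnt
  have : (Set.Iio T ∩ Set.Iio n).ncard ≤ (Set.Iio T).ncard :=
    Set.ncard_le_ncard Set.inter_subset_left (Set.finite_Iio T)
  rw [Set.ncard_eq_toFinset_card' (Set.Iio T)] at this
  simp only [Set.toFinset_Iio, Nat.card_Iio] at this
  exact_mod_cast this

lemma cnt_biUnion (s : Finset ℕ) (D : ℕ → Set ℕ) (n : ℕ) :
    cnt (⋃ i ∈ s, D i) n ≤ ∑ i ∈ s, cnt (D i) n := by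
  classical
  induction s using Finset.induction_on with
  | empty => simp [cnt]
  | insert a s ha ih =>
    rw [Finset.set_biUnion_insert, Finset.sum_insert ha]
    exact (cnt_union _ _ _).trans (by gcongr)

/-- the recursion `ψ_c(2n+b) = b c_0 + ψ_{shift c}(n)` (Walsh functions) -/
def psi (c : ℕ → ZMod 2) (n : ℕ) : ZMod 2 :=
  ∑ j ∈ Finset.range n, if n.testBit j then c j else 0

lemma psi_zero (c : ℕ → ZMod 2) : psi c 0 = 0 := by simp [psi]

lemma psi_eq (c : ℕ → ZMod 2) (n m : ℕ) (h : n ≤ m) :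
    psi c n = ∑ j ∈ Finset.range m, if n.testBit j then c j else 0 := by
  unfold psi
  apply Finset.sum_subset
  · intro x; simp; omega
  · intro x _ hx
    simp only [Finset.mem_range, not_lt] at hx
    rw [Nat.testBit_lt_two_pow]
    · simp
    · exact lt_of_le_of_lt hx Nat.lt_two_pow_self

lemma psi_even (c : ℕ → ZMod 2) (n : ℕ) : psi c (2 * n) = psi (fun j => c (j + 1)) n := by
  rw [psi_eq c (2*n) (2*n+1) (by omega), psi_eq _ n (2*n) (by omega), Finset.sum_range_succ']
  simp [Nat.testBit_succ]

lemma psi_odd (c : ℕ → ZMod 2) (n : ℕ) :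
    psi c (2 * n + 1) = c 0 + psi (fun j => c (j + 1)) n := by
  rw [psi_eq c (2*n+1) (2*n+1) (by omega), psi_eq _ n (2*n) (by omega), Finset.sum_range_succ']
  have : (2 * n + 1) / 2 = n := by omega
  simp only [Nat.testBit_succ, this]
  simp [add_comm]

lemma psi_sum {ι : Type*} (s : Finset ι) (c : ι → ℕ → ZMod 2) (n : ℕ) :
    psi (∑ i ∈ s, c i) n = ∑ i ∈ s, psi (c i) n := by
  unfold psi
  rw [Finset.sum_comm]
  refine Finset.sum_congr rfl fun j _ => ?_
  split_ifs <;> simp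

/-- sign of an element of `ZMod 2` -/
def sgn (a : ZMod 2) : ℝ := if a = 0 then 1 else -1

lemma sgn_add (a b : ZMod 2) : sgn (a + b) = sgn a * sgn b := by
  revert a b
  have key : ∀ a : ZMod 2, a = 0 ∨ a = 1 := by decide
  intro a b
  have h2 : (1 : ZMod 2) + 1 = 0 := by decide
  rcases key a with rfl | rfl <;> rcases key b with rfl | rfl <;> simp [sgn, h2]

lemma sgn_zero : sgn 0 = 1 := by simp [sgn]
lemma sgn_one : sgn 1 = -1 := by simp [sgn]

lemma abs_sgn (a : ZMod 2) : |sgn a| = 1 := by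
  unfold sgn; split_ifs <;> simp

lemma sum_double (f : ℕ → ℝ) (N : ℕ) :
    ∑ n ∈ Finset.range (2 * N), f n = ∑ n ∈ Finset.range N, (f (2 * n) + f (2 * n + 1)) := by
  induction N with
  | zero => simp
  | succ N ih =>
    rw [show 2 * (N + 1) = 2 * N + 1 + 1 by ring, Finset.sum_range_succ, Finset.sum_range_succ, ih,
      Finset.sum_range_succ]
    ring

lemma walsh_bound (j : ℕ) : ∃ B : ℝ, ∀ c : ℕ → ZMod 2, c j ≠ 0 → ∀ N : ℕ,
    |∑ n ∈ Finset.range N, sgn (psi c n)| ≤ B := by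
  have key : ∀ a : ZMod 2, a = 0 ∨ a = 1 := by decide
  have red : ∀ (c : ℕ → ZMod 2) (N : ℕ), |∑ n ∈ Finset.range N, sgn (psi c n)| ≤
      |∑ n ∈ Finset.range (2 * (N / 2)), sgn (psi c n)| + 1 := by
    intro c N
    rcases Nat.even_or_odd' N with ⟨k, rfl | rfl⟩
    · simp
    · rw [show (2 * k + 1) / 2 = k by omega, Finset.sum_range_succ]
      refine (abs_add_le _ _).trans ?_
      rw [abs_sgn]
  have dbl : ∀ (c : ℕ → ZMod 2) (N : ℕ), ∑ n ∈ Finset.range (2 * N), sgn (psi c n) =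
      (1 + sgn (c 0)) * ∑ n ∈ Finset.range N, sgn (psi (fun j => c (j + 1)) n) := by
    intro c N
    rw [sum_double, Finset.mul_sum]
    refine Finset.sum_congr rfl fun n _ => ?_
    rw [psi_even, psi_odd, sgn_add]; ring
  induction j with
  | zero =>
    refine ⟨1, fun c hc N => ?_⟩
    have h1 : c 0 = 1 := (key _).resolve_left hc
    refine (red c N).trans ?_
    rw [dbl, h1, sgn_one]; simp
  | succ j ih =>
    obtain ⟨B, hB⟩ := ih
    refine ⟨2 * B + 1, fun c hc N => ?_⟩
    refine (red c N).trans ?_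
    rw [dbl, abs_mul]
    have h1 := hB (fun j => c (j + 1)) hc (N / 2)
    have h2 : |1 + sgn (c 0)| ≤ 2 := by
      refine (abs_add_le _ _).trans ?_
      rw [abs_sgn]; norm_num
    have := mul_le_mul h2 h1 (abs_nonneg _) (by norm_num)
    linarith

lemma walsh_avg (c : ℕ → ZMod 2) (hc : c ≠ 0) :
    Tendsto (fun N : ℕ => (∑ n ∈ Finset.range N, sgn (psi c n)) / N) atTop (𝓝 0) := by
  obtain ⟨j, hj⟩ := Function.ne_iff.1 hc
  obtain ⟨B, hB⟩ := walsh_bound j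
  refine squeeze_zero_norm (a := fun N : ℕ => B / N) (fun N => ?_)
    (tendsto_const_div_atTop_nhds_zero_nat B)
  rw [norm_div, Real.norm_eq_abs, Real.norm_natCast]
  gcongr
  exact hB c hj N

lemma exists_indep : ∃ c : Set ℕ → (ℕ → ZMod 2), LinearIndependent (ZMod 2) c := by
  have b := Module.Basis.ofVectorSpace (ZMod 2) (ℕ → ZMod 2)
  have h1 := b.mk_eq_rank''
  rw [rank_fun_infinite] at h1
  have h2 : Cardinal.mk (Set ℕ) = Cardinal.mk (ℕ → ZMod 2) := by
    simp [Cardinal.mk_set]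
  rw [← h1] at h2
  obtain ⟨e⟩ := Cardinal.eq.1 h2
  exact ⟨_, b.linearIndependent.comp e e.injective⟩

end

noncomputable section

/-- characters of the Cantor cube -/
def chi (G : Finset (Set ℕ)) : C(CantorCube, ℝ) where
  toFun x := sgn (∑ S ∈ G, x S)
  continuous_toFun := by
    have h : Continuous sgn := continuous_of_discreteTopology
    exact h.comp (continuous_finsetSum _ fun S _ => continuous_apply S)

lemma chi_apply (G : Finset (Set ℕ)) (x : CantorCube) : chi G x = sgn (∑ S ∈ G, x S) := rfl

lemma chi_mul (G H : Finset (Set ℕ)) : chi G * chi H = chi (G ∆ H) := by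
  ext x
  rw [ContinuousMap.mul_apply, chi_apply, chi_apply, chi_apply, ← sgn_add]
  congr 1
  have h2 : ∀ a : ZMod 2, a + a = 0 := by decide
  have h1 := Finset.sum_sdiff (f := x) (Finset.inter_subset_left : G ∩ H ⊆ G)
  have h3 := Finset.sum_sdiff (f := x) (Finset.inter_subset_right : G ∩ H ⊆ H)
  have h4 : G ∆ H = (G \ (G ∩ H)) ∪ (H \ (G ∩ H)) := by
    ext a; simp only [Finset.mem_symmDiff, Finset.mem_union, Finset.mem_sdiff, Finset.mem_inter]; tauto
  have h5 : Disjoint (G \ (G ∩ H)) (H \ (G ∩ H)) := by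
    rw [Finset.disjoint_left]; intro a; simp only [Finset.mem_sdiff, Finset.mem_inter]; tauto
  rw [h4, Finset.sum_union h5, ← h1, ← h3]
  have := h2 (∑ S ∈ G ∩ H, x S)
  linear_combination this

lemma chi_empty : chi ∅ = 1 := by
  ext x; simp [chi_apply, sgn_zero]

/-- the submonoid of characters -/
def chiMonoid : Submonoid C(CantorCube, ℝ) where
  carrier := Set.range chi
  mul_mem' := by
    rintro _ _ ⟨G, rfl⟩ ⟨H, rfl⟩
    exact ⟨_, (chi_mul G H).symm⟩
  one_mem' := ⟨∅, chi_empty⟩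

lemma chi_span_dense :
    closure ((Submodule.span ℝ (Set.range chi) : Submodule ℝ C(CantorCube, ℝ)) :
      Set C(CantorCube, ℝ)) = Set.univ := by
  have h := ContinuousMap.subalgebra_topologicalClosure_eq_top_of_separatesPoints
    (Algebra.adjoin ℝ (Set.range chi)) (by
      intro x y hxy
      obtain ⟨S, hS⟩ := Function.ne_iff.1 hxy
      refine ⟨_, ⟨chi {S}, Algebra.subset_adjoin ⟨{S}, rfl⟩, rfl⟩, ?_⟩
      simp only [chi_apply, Finset.sum_singleton]
      have key : ∀ a b : ZMod 2, a ≠ b → (a = 0 ∧ b = 1) ∨ (a = 1 ∧ b = 0) := by decide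
      rcases key _ _ hS with ⟨h1, h2⟩ | ⟨h1, h2⟩ <;> rw [h1, h2, sgn_one, sgn_zero] <;> norm_num)
  have h2 : (Submodule.span ℝ (Set.range chi) : Submodule ℝ C(CantorCube, ℝ)) =
      Subalgebra.toSubmodule (Algebra.adjoin ℝ (Set.range chi)) := by
    rw [Algebra.adjoin_eq_span]
    congr 1
    exact (congrArg (fun M : Submonoid C(CantorCube, ℝ) => (M : Set C(CantorCube, ℝ)))
      (Submonoid.closure_eq chiMonoid)).symm
  rw [h2]
  have := congrArg (fun A : Subalgebra ℝ C(CantorCube, ℝ) => (A : Set C(CantorCube, ℝ))) h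
  simpa using this

lemma integral_chi (μ : Measure CantorCube) [μ.IsAddHaarMeasure] [IsProbabilityMeasure μ]
    (G : Finset (Set ℕ)) (hG : G.Nonempty) : ∫ x, chi G x ∂μ = 0 := by
  obtain ⟨S, hS⟩ := hG
  have h := integral_add_left_eq_self (μ := μ) (fun x => chi G x) (Pi.single S 1 : CantorCube)
  have h2 : ∀ x, chi G ((Pi.single S 1 : CantorCube) + x) = - chi G x := by
    intro x
    rw [chi_apply, chi_apply]
    simp only [Pi.add_apply, Finset.sum_add_distrib]
    rw [Finset.sum_pi_single', if_pos hS, sgn_add, sgn_one]; ring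
  simp only [h2, integral_neg] at h
  linarith

lemma exists_seq : ∃ x : ℕ → CantorCube, ∀ G : Finset (Set ℕ), G.Nonempty →
    Tendsto (fun N : ℕ => (∑ n ∈ Finset.range N, chi G (x n)) / N) atTop (𝓝 0) := by
  obtain ⟨c, hc⟩ := exists_indep
  refine ⟨fun n S => psi (c S) n, fun G hG => ?_⟩
  simp only [chi_apply, ← psi_sum]
  apply walsh_avg
  intro h0
  obtain ⟨S, hS⟩ := hG
  have := linearIndependent_iff'.1 hc G (fun _ => 1) (by simpa using h0) S hS
  exact one_ne_zero this

lemma equidist (μ : Measure CantorCube) [μ.IsAddHaarMeasure] [IsProbabilityMeasure μ]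
    (x : ℕ → CantorCube) (hx : ∀ G : Finset (Set ℕ), G.Nonempty →
    Tendsto (fun N : ℕ => (∑ n ∈ Finset.range N, chi G (x n)) / N) atTop (𝓝 0))
    (f : C(CantorCube, ℝ)) :
    Tendsto (fun N : ℕ => (∑ n ∈ Finset.range N, f (x n)) / N) atTop (𝓝 (∫ y, f y ∂μ)) := by
  have hint : ∀ f : C(CantorCube, ℝ), Integrable f μ := fun f =>
    f.continuous.integrable_of_hasCompactSupport (HasCompactSupport.of_compactSpace f)
  have hspan : ∀ f ∈ (Submodule.span ℝ (Set.range chi) : Submodule ℝ C(CantorCube, ℝ)),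
      Tendsto (fun N : ℕ => (∑ n ∈ Finset.range N, f (x n)) / N) atTop (𝓝 (∫ y, f y ∂μ)) := by
    intro f hf
    induction hf using Submodule.span_induction with
    | mem f h =>
      obtain ⟨G, rfl⟩ := h
      rcases G.eq_empty_or_nonempty with rfl | hG
      · rw [chi_empty]
        simp only [ContinuousMap.one_apply, Finset.sum_const, Finset.card_range, nsmul_eq_mul,
          mul_one, integral_const, probReal_univ, smul_eq_mul]
        refine tendsto_const_nhds.congr' ?_
        filter_upwards [eventually_gt_atTop 0] with N hN
        have : (N : ℝ) ≠ 0 := by positivity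
        field_simp
      · rw [integral_chi μ G hG]
        exact hx G hG
    | zero => simp
    | add f g _ _ hf hg =>
      simp only [ContinuousMap.add_apply]
      rw [integral_add (hint f) (hint g)]
      refine (hf.add hg).congr fun N => ?_
      rw [Finset.sum_add_distrib, add_div]
    | smul a f _ hf =>
      simp only [ContinuousMap.smul_apply, smul_eq_mul]
      rw [integral_const_mul]
      refine (hf.const_mul a).congr fun N => ?_
      rw [← Finset.mul_sum, mul_div_assoc]
  have hf : f ∈ closure ((Submodule.span ℝ (Set.range chi) : Submodule ℝ C(CantorCube, ℝ)) :
      Set C(CantorCube, ℝ)) := by rw [chi_span_dense]; trivial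
  rw [Metric.tendsto_atTop]
  intro ε hε
  obtain ⟨g, hg, hfg⟩ := Metric.mem_closure_iff.1 hf (ε / 3) (by positivity)
  obtain ⟨N₀, hN₀⟩ := Metric.tendsto_atTop.1 (hspan g hg) (ε / 3) (by positivity)
  refine ⟨N₀, fun N hN => ?_⟩
  have h1 := hN₀ N hN
  have hpt : ∀ y, |f y - g y| ≤ ε / 3 := fun y =>
    (ContinuousMap.dist_apply_le_dist y).trans hfg.le
  have h2 : |∫ y, f y ∂μ - ∫ y, g y ∂μ| ≤ ε / 3 := by
    rw [← integral_sub (hint f) (hint g)]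
    have := norm_integral_le_of_norm_le_const (μ := μ) (f := fun y => f y - g y) (C := ε / 3)
      (Eventually.of_forall hpt)
    simpa using this
  have h3 : |(∑ n ∈ Finset.range N, f (x n)) / N - (∑ n ∈ Finset.range N, g (x n)) / N| ≤ ε / 3 := by
    rw [← sub_div, ← Finset.sum_sub_distrib, abs_div, Nat.abs_cast]
    apply div_le_of_le_mul₀ (by positivity) (by positivity)
    refine (Finset.abs_sum_le_sum_abs _ _).trans ?_
    refine (Finset.sum_le_card_nsmul _ _ _ fun n _ => hpt (x n)).trans ?_
    simp [mul_comm]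
  rw [Real.dist_eq] at h1 ⊢
  rw [abs_lt] at h1 ⊢
  rw [abs_le] at h2 h3
  constructor <;> linarith

lemma clopen_density (μ : Measure CantorCube) [μ.IsAddHaarMeasure] [IsProbabilityMeasure μ]
    (x : ℕ → CantorCube) (hx : ∀ G : Finset (Set ℕ), G.Nonempty →
    Tendsto (fun N : ℕ => (∑ n ∈ Finset.range N, chi G (x n)) / N) atTop (𝓝 0))
    (C : Set CantorCube) (hC : IsClopen C) :
    Tendsto (fun N : ℕ => cnt (x ⁻¹' C) N / N) atTop (𝓝 (μ.real C)) := by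
  classical
  have h := equidist μ x hx ⟨C.indicator 1, hC.continuous_indicator continuous_one⟩
  simp only [ContinuousMap.coe_mk] at h
  rw [integral_indicator_one hC.isOpen.measurableSet] at h
  refine h.congr fun N => ?_
  congr 1
  unfold cnt
  have : x ⁻¹' C ∩ Set.Iio N = ↑((Finset.range N).filter fun n => x n ∈ C) := by
    ext n; simp [and_comm]
  rw [this, Set.ncard_coe_finset, Finset.card_filter]
  push_cast
  refine Finset.sum_congr rfl fun n _ => ?_
  simp [Set.indicator_apply]

lemma clopen_approx (μ : Measure CantorCube) [μ.IsAddHaarMeasure] [IsProbabilityMeasure μ]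
    (A : Set CantorCube) (hA : NullMeasurableSet A μ) (ε : ℝ) (hε : 0 < ε) :
    ∃ C, IsClopen C ∧ μ.real (A ∆ C) ≤ ε := by
  have hreg : μ.Regular := by
    let K : TopologicalSpace.PositiveCompacts CantorCube := ⊤
    have hp : IsProbabilityMeasure (Measure.addHaarMeasure K) := ⟨Measure.addHaarMeasure_self⟩
    rw [Measure.isAddHaarMeasure_eq_of_isProbabilityMeasure μ (Measure.addHaarMeasure K)]
    infer_instance
  have he : ENNReal.ofReal (ε / 2) ≠ 0 := by simp [hε]
  obtain ⟨U, hU, -, hUA⟩ := hA.exists_isOpen_symmDiff_lt (measure_ne_top _ _) he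
  obtain ⟨K, hKU, hK, hKc, hUK⟩ :=
    hU.measurableSet.exists_isCompact_isClosed_sdiff_lt (measure_ne_top μ _) he
  obtain ⟨C, hC, hKC, hCU⟩ := exists_clopen_of_closed_subset_open hKc hU hKU
  refine ⟨C, hC, ?_⟩
  have hsub : A ∆ C ⊆ (U ∆ A) ∪ (U \ K) := by
    intro y
    have h1 := @hKC y
    have h2 := @hCU y
    simp only [Set.mem_symmDiff, Set.mem_union, Set.mem_sdiff]
    tauto
  apply ENNReal.toReal_le_of_le_ofReal hε.le
  calc μ (A ∆ C) ≤ μ (U ∆ A) + μ (U \ K) := (measure_mono hsub).trans (measure_union_le _ _)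
    _ ≤ ENNReal.ofReal (ε / 2) + ENNReal.ofReal (ε / 2) := by gcongr
    _ = ENNReal.ofReal ε := by rw [← ENNReal.ofReal_add (by positivity) (by positivity)]; simp

/-- `E` represents `A` (along the sequence `x`) -/
def DensRep (μ : Measure CantorCube) (x : ℕ → CantorCube) (A : Set CantorCube) (E : Set ℕ) : Prop :=
  ∀ ε : ℝ, 0 < ε → ∃ C, IsClopen C ∧ μ.real (A ∆ C) ≤ ε ∧
    ∀ᶠ n : ℕ in atTop, cnt (E ∆ (x ⁻¹' C)) n ≤ ε * n

section rep
variable {μ : Measure CantorCube} [IsProbabilityMeasure μ] {x : ℕ → CantorCube}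

lemma DensRep.compl {A : Set CantorCube} {E : Set ℕ} (h : DensRep μ x A E) : DensRep μ x Aᶜ Eᶜ := by
  intro ε hε
  obtain ⟨C, hC, h1, h2⟩ := h ε hε
  refine ⟨Cᶜ, hC.compl, ?_, ?_⟩
  · rwa [compl_symmDiff_compl]
  · rwa [Set.preimage_compl, compl_symmDiff_compl]

lemma DensRep.op {A B D : Set CantorCube} {E F H : Set ℕ} (hA : DensRep μ x A E) (hB : DensRep μ x B F)
    (p : Prop → Prop → Prop) (hD : ∀ y, y ∈ D ↔ p (y ∈ A) (y ∈ B))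
    (hH : ∀ n, n ∈ H ↔ p (n ∈ E) (n ∈ F))
    (hp : ∀ C₁ C₂ : Set CantorCube, IsClopen C₁ → IsClopen C₂ →
      IsClopen {y | p (y ∈ C₁) (y ∈ C₂)}) : DensRep μ x D H := by
  intro ε hε
  obtain ⟨C, hC, h1, h2⟩ := hA (ε / 2) (by positivity)
  obtain ⟨C', hC', h1', h2'⟩ := hB (ε / 2) (by positivity)
  have hcongr : ∀ a b c d : Prop, (a ↔ c) → (b ↔ d) → (p a b ↔ p c d) := by
    intro a b c d h h'; rw [h, h']
  refine ⟨_, hp C C' hC hC', ?_, ?_⟩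
  · have hsub : D ∆ {y | p (y ∈ C) (y ∈ C')} ⊆ (A ∆ C) ∪ (B ∆ C') := by
      intro y
      have := hcongr (y ∈ A) (y ∈ B) (y ∈ C) (y ∈ C')
      simp only [Set.mem_symmDiff, Set.mem_union, Set.mem_setOf_eq, hD]
      tauto
    have := (measureReal_mono (μ := μ) hsub (measure_ne_top _ _)).trans (measureReal_union_le _ _)
    linarith
  · filter_upwards [h2, h2'] with n hn hn'
    have hsub : H ∆ (x ⁻¹' {y | p (y ∈ C) (y ∈ C')}) ∩ Set.Iio n ⊆
        (E ∆ (x ⁻¹' C)) ∪ (F ∆ (x ⁻¹' C')) := by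
      rintro m ⟨hm, -⟩
      revert hm
      have := hcongr (m ∈ E) (m ∈ F) (x m ∈ C) (x m ∈ C')
      simp only [Set.mem_symmDiff, Set.mem_union, Set.mem_setOf_eq, hH, Set.mem_preimage]
      tauto
    have := (cnt_mono hsub).trans (cnt_union _ _ _)
    linarith

lemma DensRep.inter {A B : Set CantorCube} {E F : Set ℕ} (hA : DensRep μ x A E) (hB : DensRep μ x B F) :
    DensRep μ x (A ∩ B) (E ∩ F) :=
  hA.op hB And (fun _ => Iff.rfl) (fun _ => Iff.rfl) fun _ _ h h' => h.inter h'

lemma DensRep.union {A B : Set CantorCube} {E F : Set ℕ} (hA : DensRep μ x A E) (hB : DensRep μ x B F) :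
    DensRep μ x (A ∪ B) (E ∪ F) :=
  hA.op hB Or (fun _ => Iff.rfl) (fun _ => Iff.rfl) fun _ _ h h' => h.union h'

lemma DensRep.symmDiff {A B : Set CantorCube} {E F : Set ℕ} (hA : DensRep μ x A E) (hB : DensRep μ x B F) :
    DensRep μ x (A ∆ B) (E ∆ F) :=
  (hA.inter hB.compl).union (hB.inter hA.compl)

lemma cnt_le_add_symm (E F : Set ℕ) (n : ℕ) : cnt E n ≤ cnt F n + cnt (E ∆ F) n := by
  refine (cnt_mono ?_).trans (cnt_union _ _ _)
  rintro m ⟨hm, -⟩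
  simp only [Set.mem_union, Set.mem_symmDiff]; tauto

lemma real_le_add_symm (A B : Set CantorCube) : μ.real A ≤ μ.real B + μ.real (A ∆ B) := by
  refine (measureReal_mono ?_).trans (measureReal_union_le _ _)
  intro m hm
  simp only [Set.mem_union, Set.mem_symmDiff]; tauto

lemma DensRep.hasDensity
    (hx : ∀ C, IsClopen C → Tendsto (fun N : ℕ => cnt (x ⁻¹' C) N / N) atTop (𝓝 (μ.real C)))
    {A : Set CantorCube} {E : Set ℕ} (h : DensRep μ x A E) : HasDensity E (μ.real A) := by
  change Tendsto (fun N : ℕ => cnt E N / N) atTop (𝓝 (μ.real A))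
  rw [Metric.tendsto_nhds]
  intro ε hε
  obtain ⟨C, hC, h1, h2⟩ := h (ε / 4) (by positivity)
  filter_upwards [h2, Metric.tendsto_nhds.1 (hx C hC) (ε / 4) (by positivity),
    eventually_gt_atTop 0] with n hn hn' hpos
  have hpos' : (0 : ℝ) < n := by exact_mod_cast hpos
  have e1 := cnt_le_add_symm E (x ⁻¹' C) n
  have e2 := cnt_le_add_symm (x ⁻¹' C) E n
  rw [symmDiff_comm] at e2
  have m1 := real_le_add_symm (μ := μ) A C
  have m2 := real_le_add_symm (μ := μ) C A
  rw [symmDiff_comm] at m2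
  have e3 : cnt E n / n ≤ cnt (x ⁻¹' C) n / n + ε / 4 := by
    rw [div_le_iff₀ hpos', add_mul, div_mul_cancel₀ _ hpos'.ne']; linarith
  have e4 : cnt (x ⁻¹' C) n / n ≤ cnt E n / n + ε / 4 := by
    rw [div_le_iff₀ hpos', add_mul, div_mul_cancel₀ _ hpos'.ne']; linarith
  rw [Real.dist_eq, abs_lt] at hn' ⊢
  constructor <;> linarith

lemma exists_rep
    (hx : ∀ C, IsClopen C → Tendsto (fun N : ℕ => cnt (x ⁻¹' C) N / N) atTop (𝓝 (μ.real C)))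
    (A : Set CantorCube) (hA : ∀ ε : ℝ, 0 < ε → ∃ C, IsClopen C ∧ μ.real (A ∆ C) ≤ ε) :
    ∃ E, DensRep μ x A E := by
  choose C hC hCA using fun k : ℕ => hA ((1 / 2) ^ k / 4) (by positivity)
  have hD : ∀ k, ∃ N : ℕ, ∀ n ≥ N,
      cnt ((x ⁻¹' C k) ∆ (x ⁻¹' C (k + 1))) n ≤ (1 / 2 : ℝ) ^ k * n := by
    intro k
    have hlt : μ.real (C k ∆ C (k + 1)) < (1 / 2 : ℝ) ^ k := by
      have hsub : C k ∆ C (k + 1) ⊆ (A ∆ C k) ∪ (A ∆ C (k + 1)) := by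
        intro y
        simp only [Set.mem_symmDiff, Set.mem_union]; tauto
      have h1 := (measureReal_mono (μ := μ) hsub (measure_ne_top _ _)).trans (measureReal_union_le _ _)
      have h2 := hCA k
      have h3 := hCA (k + 1)
      have h4 : (0 : ℝ) < (1 / 2) ^ k := by positivity
      rw [pow_succ] at h3
      linarith
    have hcl : IsClopen (C k ∆ C (k + 1)) :=
      ((hC k).inter (hC (k + 1)).compl).union ((hC (k + 1)).inter (hC k).compl)
    obtain ⟨N, hN⟩ := eventually_atTop.1
      (((hx _ hcl).eventually_lt_const hlt).and (eventually_gt_atTop 0))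
    refine ⟨N, fun n hn => ?_⟩
    obtain ⟨h1, h2⟩ := hN n hn
    have hpos' : (0 : ℝ) < n := by exact_mod_cast h2
    rw [div_lt_iff₀ hpos'] at h1
    exact h1.le
  choose N hN using hD
  classical
  let l : ℕ → ℕ := fun n => Nat.findGreatest (fun l => ∀ i < l, N i ≤ n) n
  have hl1 : ∀ n, ∀ i < l n, N i ≤ n := by
    intro n
    exact Nat.findGreatest_spec (P := fun l => ∀ i < l, N i ≤ n) (Nat.zero_le n)
      (fun i hi => absurd hi (Nat.not_lt_zero i))
  have hl2 : ∀ m n, m ≤ n → l m ≤ l n := by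
    intro m n hmn
    exact Nat.findGreatest_mono (fun l h i hi => (h i hi).trans hmn) hmn
  have hl3 : ∀ j, ∃ T, ∀ n ≥ T, j ≤ l n := by
    intro j
    refine ⟨j + ∑ i ∈ Finset.range j, N i, fun n hn => ?_⟩
    refine Nat.le_findGreatest (by omega) fun i hi => ?_
    have := Finset.single_le_sum (f := N) (fun _ _ => Nat.zero_le _) (Finset.mem_range.2 hi)
    omega
  let E : Set ℕ := {m | x m ∈ C (l m)}
  refine ⟨E, fun ε hε => ?_⟩
  obtain ⟨j, hj⟩ := exists_pow_lt_of_lt_one (show 0 < ε / 4 by positivity)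
    (show (1 / 2 : ℝ) < 1 by norm_num)
  refine ⟨C j, hC j, ?_, ?_⟩
  · have := hCA j
    linarith
  obtain ⟨T, hT⟩ := hl3 j
  obtain ⟨T', hT'⟩ := exists_nat_ge (T / (ε / 4) : ℝ)
  filter_upwards [eventually_ge_atTop T'] with n hn
  have hTn : (T : ℝ) ≤ ε / 4 * n := by
    rw [div_le_iff₀ (by positivity)] at hT'
    have : (T' : ℝ) ≤ n := by exact_mod_cast hn
    nlinarith
  have tel : ∀ (m a b : ℕ), a ≤ b → (¬ (x m ∈ C a ↔ x m ∈ C b)) →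
      ∃ i ∈ Finset.Ico a b, ¬ (x m ∈ C i ↔ x m ∈ C (i + 1)) := by
    intro m a b hab
    induction b, hab using Nat.le_induction with
    | base => intro h; exact absurd Iff.rfl h
    | succ b hab ih =>
      intro h
      by_cases h' : (x m ∈ C a ↔ x m ∈ C b)
      · exact ⟨b, by simp [hab], by rwa [h'] at h⟩
      · obtain ⟨i, hi, h2⟩ := ih h'
        exact ⟨i, by simp at hi ⊢; omega, h2⟩
  have hsub : E ∆ (x ⁻¹' C j) ∩ Set.Iio n ⊆
      Set.Iio T ∪ ⋃ i ∈ Finset.Ico j (l n), (x ⁻¹' C i) ∆ (x ⁻¹' C (i + 1)) := by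
    rintro m ⟨hm, hmn⟩
    by_cases hmT : m < T
    · exact Or.inl hmT
    right
    have hjl := hT m (not_lt.1 hmT)
    obtain ⟨i, hi, h2⟩ := tel m j (l m) hjl (by
      have h0 : m ∈ E ↔ x m ∈ C (l m) := Iff.rfl
      rw [Set.mem_symmDiff, h0, Set.mem_preimage] at hm
      tauto)
    have hmono := hl2 m n (le_of_lt hmn)
    simp only [Set.mem_iUnion]
    refine ⟨i, by simp at hi ⊢; omega, ?_⟩
    rw [Set.mem_symmDiff, Set.mem_preimage, Set.mem_preimage]
    tauto
  have hgeo : ∀ b, ∑ i ∈ Finset.Ico j b, (1 / 2 : ℝ) ^ i ≤ 2 * (1 / 2) ^ j := by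
    intro b
    rcases le_total j b with hjb | hjb
    · have : ∑ i ∈ Finset.Ico j b, (1 / 2 : ℝ) ^ i = 2 * (1 / 2) ^ j - 2 * (1 / 2) ^ b := by
        rw [geom_sum_Ico (by norm_num) hjb]; ring
      rw [this]
      have : (0 : ℝ) < (1 / 2) ^ b := by positivity
      linarith
    · rw [Finset.Ico_eq_empty_of_le hjb]; simp
  have h1 := (cnt_mono hsub).trans (cnt_union _ _ _)
  have h2 := cnt_Iio_le T n
  have h3 := cnt_biUnion (Finset.Ico j (l n)) (fun i => (x ⁻¹' C i) ∆ (x ⁻¹' C (i + 1))) n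
  have h4 : ∑ i ∈ Finset.Ico j (l n), cnt ((x ⁻¹' C i) ∆ (x ⁻¹' C (i + 1))) n ≤
      ∑ i ∈ Finset.Ico j (l n), (1 / 2 : ℝ) ^ i * n :=
    Finset.sum_le_sum fun i hi => hN i n (hl1 n i (Finset.mem_Ico.1 hi).2)
  rw [← Finset.sum_mul] at h4
  have h5 : (∑ i ∈ Finset.Ico j (l n), (1 / 2 : ℝ) ^ i) * n ≤ (ε / 2) * n := by
    gcongr
    have := hgeo (l n)
    linarith
  have h6 : (0 : ℝ) ≤ n := Nat.cast_nonneg n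
  nlinarith

end rep

end

/-- Theorem 3: the measure algebra `H(2^𝔠)/Δ_H` of Haar-measurable subsets of the Cantor
cube `2^𝔠` modulo Haar-null sets admits a measure-preserving embedding into `𝒫(ℕ)/Δ_d`:
there is a map `Φ` on Haar-measurable sets such that `d(Φ(a)) = μ(a)`, `Φ` is a Boolean
homomorphism modulo density zero, and `Φ` is injective modulo density zero. -/
theorem haar_algebra_embeds_into_density_quotient
    (μ : Measure CantorCube) [μ.IsAddHaarMeasure] [IsProbabilityMeasure μ] :
    ∃ Φ : Set CantorCube → Set ℕ,
      -- (i) measure-preserving: the density of `Φ A` exists and equals `μ A`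
      (∀ A : Set CantorCube, NullMeasurableSet A μ → HasDensity (Φ A) (μ A).toReal) ∧
      -- (ii) Boolean homomorphism modulo `Δ_d`
      (∀ A B : Set CantorCube, NullMeasurableSet A μ → NullMeasurableSet B μ →
        HasDensity (Φ (A ∩ B) ∆ (Φ A ∩ Φ B)) 0 ∧
        HasDensity (Φ (A ∪ B) ∆ (Φ A ∪ Φ B)) 0) ∧
      (∀ A : Set CantorCube, NullMeasurableSet A μ →
        HasDensity (Φ Aᶜ ∆ (Φ A)ᶜ) 0) ∧
      -- (iii) injective modulo `Δ_d`
      (∀ A B : Set CantorCube, NullMeasurableSet A μ → NullMeasurableSet B μ →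
        0 < μ (A ∆ B) → 0 < upperDensity (Φ A ∆ Φ B)) := by
  classical
  obtain ⟨x, hx'⟩ := exists_seq
  have hx := clopen_density μ x hx'
  have hex : ∀ A : Set CantorCube, ∃ E : Set ℕ, NullMeasurableSet A μ → DensRep μ x A E := by
    intro A
    by_cases hA : NullMeasurableSet A μ
    · obtain ⟨E, hE⟩ := exists_rep hx A (clopen_approx μ A hA)
      exact ⟨E, fun _ => hE⟩
    · exact ⟨∅, fun h => absurd h hA⟩
  choose Φ hΦ using hex
  have zero : ∀ (A : Set CantorCube) (E F : Set ℕ), DensRep μ x A E → DensRep μ x A F →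
      HasDensity (E ∆ F) 0 := by
    intro A E F hE hF
    have := (hE.symmDiff hF).hasDensity hx
    simpa using this
  refine ⟨Φ, fun A hA => (hΦ A hA).hasDensity hx, fun A B hA hB => ⟨?_, ?_⟩, fun A hA => ?_,
    fun A B hA hB hpos => ?_⟩
  · exact zero _ _ _ (hΦ _ (hA.inter hB)) ((hΦ A hA).inter (hΦ B hB))
  · exact zero _ _ _ (hΦ _ (hA.union hB)) ((hΦ A hA).union (hΦ B hB))
  · exact zero _ _ _ (hΦ _ hA.compl) (hΦ A hA).compl
  · have h := ((hΦ A hA).symmDiff (hΦ B hB)).hasDensity hx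
    unfold upperDensity
    rw [Filter.Tendsto.limsup_eq h]
    exact ENNReal.toReal_pos hpos.ne' (measure_ne_top _ _)
end

section
/- Let λ be the fair-coin product probability measure on the Cantor space 2^ℕ = {0,1}^ℕ (so that each basic clopen set determined by a finite binary string s has measure 2^{−|s|}). Then there exists a map Φ from the λ-measurable subsets of 2^ℕ to 𝒫(ℕ) such that: (i) for every λ-measurable A, the asymptotic density of Φ(A) exists and d(Φ(A)) = λ(A); (ii) Φ(A ∩ B) Δ (Φ(A) ∩ Φ(B)) and Φ(2^ℕ∖A) Δ (ℕ∖Φ(A)) have asymptotic density zero for all measurable A, B; (iii) if λ(A Δ B) > 0 then Φ(A) Δ Φ(B) has positive upper asymptotic density. Hence the Lebesgue measure algebra embeds into 𝒫(ℕ)/Δ_d by a measure-preserving embedding. -/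
open Filter Topology MeasureTheory
open scoped symmDiff

/-- The 0-1 sequence of binary digits of `n`. -/
def bitSeq (n : ℕ) : ℕ → Bool := fun j => n.testBit j

/-- `S` depends only on the first `k` coordinates. -/
def Dep (k : ℕ) (S : Set (ℕ → Bool)) : Prop :=
  ∀ x y : ℕ → Bool, (∀ j < k, x j = y j) → (x ∈ S ↔ y ∈ S)

/-- The set of integers attached to a sequence of clopen sets. -/
def DD (S : ℕ → Set (ℕ → Bool)) : Set ℕ := {n | bitSeq n ∈ S (Nat.log 4 n)}

/-- The basic cylinder given by the first `k` binary digits of `i`. -/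
def cyl (k i : ℕ) : Set (ℕ → Bool) := {x | ∀ j ∈ Finset.range k, x j = bitSeq i j}

lemma cyl_meas (k i : ℕ) : MeasurableSet (cyl k i) := by
  have : cyl k i = ⋂ j ∈ Finset.range k, (fun x : ℕ → Bool => x j) ⁻¹' {bitSeq i j} := by
    ext x; simp [cyl]
  rw [this]
  refine Finset.measurableSet_biInter _ fun j _ => ?_
  exact measurable_pi_apply j (measurableSet_singleton _)

open Classical in
lemma dep_eq {k : ℕ} {S : Set (ℕ → Bool)} (h : Dep k S) :
    S = ⋃ i ∈ (Finset.range (2 ^ k)).filter (fun i => bitSeq i ∈ S), cyl k i := by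
  ext x
  simp only [Set.mem_iUnion, Finset.mem_filter, Finset.mem_range, exists_prop, cyl,
    Set.mem_ofPred_eq]
  constructor
  · intro hx
    have hb : ∀ j < k, x j = bitSeq (Nat.ofBits (fun j : Fin k => x j)) j := by
      intro j hj
      simp [bitSeq, Nat.testBit_ofBits_lt _ j hj]
    exact ⟨Nat.ofBits (fun j : Fin k => x j), ⟨Nat.ofBits_lt_two_pow _, (h _ _ hb).1 hx⟩, hb⟩
  · rintro ⟨i, ⟨_, hi⟩, hx⟩
    exact (h _ _ hx).2 hi

lemma dep_meas {k : ℕ} {S : Set (ℕ → Bool)} (h : Dep k S) : MeasurableSet S := by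
  rw [dep_eq h]
  exact Finset.measurableSet_biUnion _ fun i _ => cyl_meas k i

lemma cyl_disj (k i i' : ℕ) (hi : i < 2 ^ k) (hi' : i' < 2 ^ k) (hne : i ≠ i') :
    Disjoint (cyl k i) (cyl k i') := by
  rw [Set.disjoint_left]
  intro x hx hx'
  apply hne
  apply Nat.eq_of_testBit_eq
  intro j
  by_cases hj : j < k
  · have h1 := hx j (Finset.mem_range.2 hj)
    have h2 := hx' j (Finset.mem_range.2 hj)
    exact h1.symm.trans h2
  · have : 2 ^ k ≤ 2 ^ j := Nat.pow_le_pow_right (by norm_num) (by omega)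
    rw [Nat.testBit_lt_two_pow (by omega), Nat.testBit_lt_two_pow (by omega)]

open Classical in
lemma dep_real (lam : Measure (ℕ → Bool)) [IsProbabilityMeasure lam]
    (hcyl : ∀ (s : Finset ℕ) (f : ℕ → Bool),
      lam {x : ℕ → Bool | ∀ i ∈ s, x i = f i} = (2 : ENNReal)⁻¹ ^ s.card)
    {k : ℕ} {S : Set (ℕ → Bool)} (h : Dep k S) :
    ∑ i ∈ Finset.range (2 ^ k), (if bitSeq i ∈ S then (1 : ℝ) else 0) = 2 ^ k * lam.real S := by
  have h1 : lam.real S = ∑ i ∈ (Finset.range (2 ^ k)).filter (fun i => bitSeq i ∈ S),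
      lam.real (cyl k i) := by
    conv_lhs => rw [dep_eq h]
    apply measureReal_biUnion_finset
    · intro i hi i' hi' hne
      simp only [Finset.coe_filter, Finset.mem_range, Set.mem_ofPred_eq] at hi hi'
      exact cyl_disj k i i' hi.1 hi'.1 hne
    · intro i _
      exact cyl_meas k i
    · intro i _
      exact measure_ne_top _ _
  have h2 : ∀ i, lam.real (cyl k i) = (2 ^ k)⁻¹ := by
    intro i
    rw [Measure.real, cyl, hcyl]
    simp
  rw [h1]
  simp only [h2]
  rw [Finset.sum_const, Finset.sum_boole, nsmul_eq_mul]
  field_simp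

open Classical in
/-- Discrepancy. -/
noncomputable def EE (lam : Measure (ℕ → Bool)) (S : ℕ → Set (ℕ → Bool)) (m : ℕ) : ℝ :=
  (if m ∈ DD S then 1 else 0) - lam.real (S (Nat.log 4 m))

lemma EE_le (lam : Measure (ℕ → Bool)) [IsProbabilityMeasure lam] (S : ℕ → Set (ℕ → Bool))
    (m : ℕ) : |EE lam S m| ≤ 1 := by
  have h0 : 0 ≤ lam.real (S (Nat.log 4 m)) := measureReal_nonneg
  have h1 : lam.real (S (Nat.log 4 m)) ≤ 1 := measureReal_le_one
  unfold EE
  rw [abs_le]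
  split_ifs <;> constructor <;> linarith

lemma EE_block (lam : Measure (ℕ → Bool)) [IsProbabilityMeasure lam]
    (hcyl : ∀ (s : Finset ℕ) (f : ℕ → Bool),
      lam {x : ℕ → Bool | ∀ i ∈ s, x i = f i} = (2 : ENNReal)⁻¹ ^ s.card)
    {S : ℕ → Set (ℕ → Bool)} (h : ∀ k, Dep k (S k)) (k j : ℕ) (hj : 2 ^ k ≤ j)
    (hj' : j < 4 * 2 ^ k) :
    ∑ i ∈ Finset.range (2 ^ k), EE lam S (2 ^ k * j + i) = 0 := by
  classical
  have h4 : 4 ^ k = 2 ^ k * 2 ^ k := by rw [← mul_pow]; norm_num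
  have key : ∀ i ∈ Finset.range (2 ^ k), EE lam S (2 ^ k * j + i) =
      (if bitSeq i ∈ S k then (1 : ℝ) else 0) - lam.real (S k) := by
    intro i hi
    rw [Finset.mem_range] at hi
    have hlog : Nat.log 4 (2 ^ k * j + i) = k := by
      rw [Nat.log_eq_iff (Or.inr ⟨by norm_num, by
        have : 0 < 2 ^ k := by positivity
        have := Nat.mul_pos this (lt_of_lt_of_le this hj)
        omega⟩)]
      constructor
      · rw [h4]; nlinarith
      · rw [pow_succ, h4]; nlinarith
    have hiff : bitSeq (2 ^ k * j + i) ∈ S k ↔ bitSeq i ∈ S k := by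
      apply h k
      intro l hl
      simp [bitSeq, Nat.testBit_two_pow_mul_add j hi, hl]
    simp only [EE, DD, Set.mem_ofPred_eq, hlog, hiff]
  rw [Finset.sum_congr rfl key, Finset.sum_sub_distrib, dep_real lam hcyl (h k)]
  simp

lemma EE_zero (lam : Measure (ℕ → Bool)) [IsProbabilityMeasure lam]
    (hcyl : ∀ (s : Finset ℕ) (f : ℕ → Bool),
      lam {x : ℕ → Bool | ∀ i ∈ s, x i = f i} = (2 : ENNReal)⁻¹ ^ s.card)
    {S : ℕ → Set (ℕ → Bool)} (h : ∀ k, Dep k (S k)) (k : ℕ) : ∀ j, 2 ^ k ≤ j →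
    j ≤ 4 * 2 ^ k → ∑ m ∈ Finset.range (2 ^ k * j), EE lam S m = 0 := by
  induction k with
  | zero =>
    intro j hj
    induction j, hj using Nat.le_induction with
    | base =>
      intro _
      have := dep_real lam hcyl (h 0)
      simp only [pow_zero, Finset.range_one, Finset.sum_singleton, one_mul] at this
      have hm : 0 ∈ DD S ↔ bitSeq 0 ∈ S 0 := by simp [DD]
      simp only [pow_zero, mul_one, Finset.range_one, Finset.sum_singleton, EE,
        Nat.log_zero_right]
      rw [← this, sub_eq_zero]
      by_cases h0 : bitSeq 0 ∈ S 0
      · rw [if_pos h0, if_pos (hm.2 h0)]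
      · rw [if_neg h0, if_neg (fun h' => h0 (hm.1 h'))]
    | succ j hj ih =>
      intro hj'
      rw [mul_add, mul_one, Finset.sum_range_add, ih (by omega),
        EE_block lam hcyl h 0 j hj (by omega), add_zero]
  | succ k ihk =>
    intro j hj
    induction j, hj using Nat.le_induction with
    | base =>
      intro _
      have := ihk (4 * 2 ^ k) (by omega) le_rfl
      convert this using 3
      ring
    | succ j hj ih =>
      intro hj'
      rw [mul_add, mul_one, Finset.sum_range_add, ih (by omega),
        EE_block lam hcyl h (k + 1) j hj (by omega), add_zero]

lemma EE_bound (lam : Measure (ℕ → Bool)) [IsProbabilityMeasure lam]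
    (hcyl : ∀ (s : Finset ℕ) (f : ℕ → Bool),
      lam {x : ℕ → Bool | ∀ i ∈ s, x i = f i} = (2 : ENNReal)⁻¹ ^ s.card)
    {S : ℕ → Set (ℕ → Bool)} (h : ∀ k, Dep k (S k)) (n : ℕ) (hn : n ≠ 0) :
    |(n⁻¹ : ℝ) * ∑ m ∈ Finset.range n, EE lam S m| ≤ (1 / 2) ^ (Nat.log 4 n) := by
  obtain ⟨k, hk⟩ : ∃ k, Nat.log 4 n = k := ⟨_, rfl⟩
  rw [hk]
  have hlo : 4 ^ k ≤ n := hk ▸ Nat.pow_log_le_self 4 hn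
  have hhi : n < 4 ^ (k + 1) := hk ▸ Nat.lt_pow_succ_log_self (by norm_num) n
  have h4 : 4 ^ k = 2 ^ k * 2 ^ k := by rw [← mul_pow]; norm_num
  have hp : 0 < 2 ^ k := by positivity
  have hj : 2 ^ k ≤ n / 2 ^ k := by
    rw [Nat.le_div_iff_mul_le hp]; omega
  have hj' : n / 2 ^ k < 4 * 2 ^ k := by
    rw [Nat.div_lt_iff_lt_mul hp]; rw [pow_succ, h4] at hhi; nlinarith
  have hz := EE_zero lam hcyl h k (n / 2 ^ k) hj hj'.le
  have hr := Nat.mod_lt n hp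
  have hsum : |∑ m ∈ Finset.range n, EE lam S m| ≤ 2 ^ k := by
    conv_lhs => rw [← Nat.div_add_mod n (2 ^ k)]
    rw [Finset.sum_range_add, hz, zero_add]
    refine (Finset.abs_sum_le_sum_abs _ _).trans ?_
    refine (Finset.sum_le_sum fun i _ => EE_le lam S _).trans ?_
    simp only [Finset.sum_const, Finset.card_range, nsmul_eq_mul, mul_one]
    exact_mod_cast hr.le
  have hn' : (0 : ℝ) < n := by positivity
  rw [abs_mul, abs_of_pos (inv_pos.2 hn'), inv_mul_le_iff₀ hn']
  refine hsum.trans ?_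
  have hlo' : (2 ^ k * 2 ^ k : ℝ) ≤ n := by exact_mod_cast h4 ▸ hlo
  rw [one_div, inv_pow, ← div_eq_mul_inv, le_div_iff₀ (by positivity)]
  exact hlo'

lemma log_tendsto : Tendsto (Nat.log 4) atTop atTop := by
  rw [tendsto_atTop]
  intro b
  filter_upwards [eventually_ge_atTop (4 ^ b)] with n hn
  exact Nat.le_log_of_pow_le (by norm_num) hn

lemma dd_density (lam : Measure (ℕ → Bool)) [IsProbabilityMeasure lam]
    (hcyl : ∀ (s : Finset ℕ) (f : ℕ → Bool),
      lam {x : ℕ → Bool | ∀ i ∈ s, x i = f i} = (2 : ENNReal)⁻¹ ^ s.card)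
    {S : ℕ → Set (ℕ → Bool)} (h : ∀ k, Dep k (S k)) {a : ℝ}
    (ha : Tendsto (fun k => lam.real (S k)) atTop (𝓝 a)) : HasDensity (DD S) a := by
  classical
  have h1 := (ha.comp log_tendsto).cesaro
  have h2 : Tendsto (fun n : ℕ => (n⁻¹ : ℝ) * ∑ m ∈ Finset.range n, EE lam S m) atTop (𝓝 0) := by
    apply squeeze_zero_norm' _
      ((tendsto_pow_atTop_nhds_zero_of_lt_one (by norm_num : (0 : ℝ) ≤ 1 / 2)
        (by norm_num)).comp log_tendsto)
    filter_upwards [eventually_ne_atTop 0] with n hn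
    exact EE_bound lam hcyl h n hn
  have h3 := h2.add h1
  rw [zero_add] at h3
  unfold HasDensity
  refine h3.congr fun n => ?_
  rw [← mul_add, ← Finset.sum_add_distrib, div_eq_inv_mul]
  congr 1
  simp only [EE, Function.comp, sub_add_cancel]
  rw [Finset.sum_boole]
  have : DD S ∩ Set.Iio n = ↑((Finset.range n).filter (fun m => m ∈ DD S)) := by
    ext m; simp [and_comm]
  rw [this, Set.ncard_coe_finset]

lemma dd_density' (lam : Measure (ℕ → Bool)) [IsProbabilityMeasure lam]
    (hcyl : ∀ (s : Finset ℕ) (f : ℕ → Bool),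
      lam {x : ℕ → Bool | ∀ i ∈ s, x i = f i} = (2 : ENNReal)⁻¹ ^ s.card)
    {S : ℕ → Set (ℕ → Bool)} (h : ∀ k, Dep k (S k)) {T : Set (ℕ → Bool)}
    (hT : NullMeasurableSet T lam)
    (ha : Tendsto (fun k => lam.real (T ∆ S k)) atTop (𝓝 0)) :
    HasDensity (DD S) (lam T).toReal := by
  apply dd_density lam hcyl h
  rw [tendsto_iff_norm_sub_tendsto_zero]
  refine squeeze_zero (fun _ => norm_nonneg _) (fun k => ?_) ha
  rw [symmDiff_comm]
  exact abs_measureReal_sub_le_measureReal_symmDiff (dep_meas (h k)).nullMeasurableSet hT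

lemma exists_dep_approx (lam : Measure (ℕ → Bool)) [IsProbabilityMeasure lam]
    (A : Set (ℕ → Bool)) (hA : NullMeasurableSet A lam) (ε : ℝ) (hε : 0 < ε) :
    ∃ k S, Dep k S ∧ lam.real (A ∆ S) < ε := by
  have hd : lam.MeasureDense (measurableCylinders fun _ : ℕ => Bool) :=
    Measure.MeasureDense.of_generateFrom_isSetAlgebra_finite lam
      isSetAlgebra_measurableCylinders generateFrom_measurableCylinders.symm
  obtain ⟨B, hB, hAB⟩ := hA
  obtain ⟨t, ht, hlt⟩ := hd.approx B hB (measure_ne_top _ _) ε hε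
  obtain ⟨s, U, _, rfl⟩ := (mem_measurableCylinders t).1 ht
  refine ⟨s.sup id + 1, cylinder s U, ?_, ?_⟩
  · intro x y hxy
    simp only [mem_cylinder]
    have : s.restrict x = s.restrict y := by
      ext i
      exact hxy i (Nat.lt_succ_of_le (Finset.le_sup (f := id) i.2))
    rw [this]
  · have : lam (A ∆ cylinder s U) = lam (B ∆ cylinder s U) :=
      measure_congr (ae_eq_set_symmDiff hAB EventuallyEq.rfl)
    rw [Measure.real, this]
    exact (ENNReal.lt_ofReal_iff_toReal_lt (measure_ne_top _ _)).1 hlt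

lemma Dep.mono {k l : ℕ} {S : Set (ℕ → Bool)} (h : Dep k S) (hkl : k ≤ l) : Dep l S :=
  fun x y hxy => h x y fun j hj => hxy j (by omega)

lemma exists_seq_s13 (lam : Measure (ℕ → Bool)) [IsProbabilityMeasure lam]
    (A : Set (ℕ → Bool)) (hA : NullMeasurableSet A lam) :
    ∃ S : ℕ → Set (ℕ → Bool), (∀ k, Dep k (S k)) ∧
      Tendsto (fun k => lam.real (A ∆ S k)) atTop (𝓝 0) := by
  have hne : ∀ k, ∃ S, Dep k S ∧
      ∀ C, Dep k C → lam.real (A ∆ S) < lam.real (A ∆ C) + 1 / ((k : ℝ) + 1) := by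
    intro k
    have hn : {r | ∃ C, Dep k C ∧ lam.real (A ∆ C) = r}.Nonempty :=
      ⟨_, ∅, fun _ _ _ => Iff.rfl, rfl⟩
    have hb : BddBelow {r | ∃ C, Dep k C ∧ lam.real (A ∆ C) = r} :=
      ⟨0, by rintro _ ⟨C, _, rfl⟩; exact measureReal_nonneg⟩
    obtain ⟨_, ⟨S, hS, rfl⟩, hlt⟩ := Real.lt_sInf_add_pos hn
      (by positivity : (0 : ℝ) < 1 / ((k : ℝ) + 1))
    refine ⟨S, hS, fun C hC => hlt.trans_le ?_⟩
    have := csInf_le hb ⟨C, hC, rfl⟩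
    linarith
  choose S hS hmin using hne
  refine ⟨S, hS, ?_⟩
  rw [Metric.tendsto_atTop]
  intro ε hε
  obtain ⟨k, C, hC, hlt⟩ := exists_dep_approx lam A hA (ε / 2) (by positivity)
  obtain ⟨N, hN⟩ := exists_nat_one_div_lt (half_pos hε)
  refine ⟨max k N, fun n hn => ?_⟩
  have h1 := hmin n C (hC.mono (le_trans (le_max_left _ _) hn))
  have h2 : 1 / ((n : ℝ) + 1) ≤ 1 / ((N : ℝ) + 1) :=
    Nat.one_div_le_one_div (le_trans (le_max_right _ _) hn)
  rw [Real.dist_eq, sub_zero, abs_of_nonneg measureReal_nonneg]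
  linarith

lemma dep_inter {k : ℕ} {S T : Set (ℕ → Bool)} (hS : Dep k S) (hT : Dep k T) : Dep k (S ∩ T) :=
  fun x y h => and_congr (hS x y h) (hT x y h)

lemma dep_compl {k : ℕ} {S : Set (ℕ → Bool)} (hS : Dep k S) : Dep k Sᶜ :=
  fun x y h => not_congr (hS x y h)

lemma dep_symm {k : ℕ} {S T : Set (ℕ → Bool)} (hS : Dep k S) (hT : Dep k T) : Dep k (S ∆ T) := by
  intro x y h
  rw [Set.mem_symmDiff, Set.mem_symmDiff, hS x y h, hT x y h]

/-- The result of \cite{F}: the measure algebra of the fair-coin product measure `λ` on the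
Cantor space `2^ℕ` (equivalently, the Lebesgue measure algebra `LM/Δ`) admits a
measure-preserving embedding into `𝒫(ℕ)/Δ_d`.  Here `lam` is a probability measure giving
each basic cylinder `{x : ∀ i ∈ s, x i = f i}` (determined by a finite binary string on a
finite set `s` of coordinates) measure `2^{-|s|}`, i.e. the fair-coin product measure. -/
theorem lebesgue_algebra_embeds_into_density_quotient
    (lam : Measure (ℕ → Bool)) [IsProbabilityMeasure lam]
    (hcyl : ∀ (s : Finset ℕ) (f : ℕ → Bool),
      lam {x : ℕ → Bool | ∀ i ∈ s, x i = f i} = (2 : ENNReal)⁻¹ ^ s.card) :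
    ∃ Φ : Set (ℕ → Bool) → Set ℕ,
      -- (i) measure-preserving: the density of `Φ A` exists and equals `lam A`
      (∀ A : Set (ℕ → Bool), NullMeasurableSet A lam → HasDensity (Φ A) (lam A).toReal) ∧
      -- (ii) Boolean homomorphism modulo `Δ_d`
      (∀ A B : Set (ℕ → Bool), NullMeasurableSet A lam → NullMeasurableSet B lam →
        HasDensity (Φ (A ∩ B) ∆ (Φ A ∩ Φ B)) 0) ∧
      (∀ A : Set (ℕ → Bool), NullMeasurableSet A lam →
        HasDensity (Φ Aᶜ ∆ (Φ A)ᶜ) 0) ∧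
      -- (iii) injective modulo `Δ_d`
      (∀ A B : Set (ℕ → Bool), NullMeasurableSet A lam → NullMeasurableSet B lam →
        0 < lam (A ∆ B) → 0 < upperDensity (Φ A ∆ Φ B)) := by
  classical
  choose! F hF hlim using exists_seq_s13 lam
  refine ⟨fun A => DD (F A), ?_, ?_, ?_, ?_⟩
  · intro A hA
    exact dd_density' lam hcyl (hF A hA) hA (hlim A hA)
  · intro A B hA hB
    have hAB := hA.inter hB
    have e : DD (F (A ∩ B)) ∆ (DD (F A) ∩ DD (F B)) =
        DD (fun k => F (A ∩ B) k ∆ (F A k ∩ F B k)) := rfl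
    rw [e]
    have := dd_density' lam hcyl (T := ∅) (fun k => dep_symm (hF _ hAB k)
      (dep_inter (hF A hA k) (hF B hB k))) MeasurableSet.empty.nullMeasurableSet ?_
    · simpa using this
    · have hl := ((hlim _ hAB).add (hlim A hA)).add (hlim B hB)
      simp only [add_zero] at hl
      refine squeeze_zero (fun _ => measureReal_nonneg) (fun k => ?_) hl
      refine le_trans (measureReal_mono (μ := lam) (s₂ := ((A ∩ B) ∆ F (A ∩ B) k ∪ A ∆ F A k) ∪
        B ∆ F B k) ?_) ((measureReal_union_le _ _).trans
          (add_le_add_left (measureReal_union_le _ _) _))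
      intro x
      simp only [Set.mem_symmDiff, Set.mem_union, Set.mem_inter_iff, Set.mem_empty_iff_false]
      tauto
  · intro A hA
    have e : DD (F Aᶜ) ∆ (DD (F A))ᶜ = DD (fun k => F Aᶜ k ∆ (F A k)ᶜ) := rfl
    rw [e]
    have := dd_density' lam hcyl (T := ∅) (fun k => dep_symm (hF _ hA.compl k)
      (dep_compl (hF A hA k))) MeasurableSet.empty.nullMeasurableSet ?_
    · simpa using this
    · have hl := (hlim _ hA.compl).add (hlim A hA)
      simp only [add_zero] at hl
      refine squeeze_zero (fun _ => measureReal_nonneg) (fun k => ?_) hl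
      refine le_trans (measureReal_mono (μ := lam) (s₂ := Aᶜ ∆ F Aᶜ k ∪ A ∆ F A k) ?_)
        (measureReal_union_le _ _)
      intro x
      simp only [Set.mem_symmDiff, Set.mem_union, Set.mem_compl_iff, Set.mem_empty_iff_false]
      tauto
  · intro A B hA hB hpos
    have e : DD (F A) ∆ DD (F B) = DD (fun k => F A k ∆ F B k) := rfl
    rw [e]
    have := dd_density' lam hcyl (T := A ∆ B) (fun k => dep_symm (hF A hA k) (hF B hB k))
      ((hA.diff hB).union (hB.diff hA)) ?_
    · unfold upperDensity
      rw [Tendsto.limsup_eq this]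
      exact ENNReal.toReal_pos hpos.ne' (measure_ne_top _ _)
    · have hl := (hlim A hA).add (hlim B hB)
      simp only [add_zero] at hl
      refine squeeze_zero (fun _ => measureReal_nonneg) (fun k => ?_) hl
      refine le_trans (measureReal_mono (μ := lam) (s₂ := A ∆ F A k ∪ B ∆ F B k) ?_)
        (measureReal_union_le _ _)
      intro x
      simp only [Set.mem_symmDiff, Set.mem_union]
      tauto
end

section
/- Let A ⊆ ℕ be an infinite set with asymptotic density d(A) = c > 0, and let e : ℕ → A be the strictly increasing enumeration of A. Then for every S ⊆ ℕ, the upper asymptotic density of the image satisfies d*(e(S)) = c · d*(S); in particular, e(S) has asymptotic density zero if and only if S has asymptotic density zero. -/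
open Filter Topology MeasureTheory
open scoped symmDiff

/-- If `A ⊆ ℕ` has positive density `c` and `e` is its strictly increasing enumeration,
then for every `S ⊆ ℕ` the image `e '' S` has upper density `c · d*(S)`; in particular
`e '' S` has density zero iff `S` has density zero. -/
theorem upperDensity_image_enumeration
    (A : Set ℕ) (hA : A.Infinite) (c : ℝ) (hc : 0 < c) (hd : HasDensity A c)
    (e : ℕ → ℕ) (he : e = Nat.nth (· ∈ A)) :
    ∀ S : Set ℕ,
      upperDensity (e '' S) = c * upperDensity S ∧
      (HasDensity (e '' S) 0 ↔ HasDensity S 0) := by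
  classical
  intro S
  subst he
  have hA' : (Set.ofPred (· ∈ A)).Infinite := hA
  set k : ℕ → ℕ := Nat.count (· ∈ A) with hk
  set v : ℕ → ℝ := fun n => ((A ∩ Set.Iio n).ncard : ℝ) / n with hv
  set g : ℕ → ℝ := fun n => ((S ∩ Set.Iio n).ncard : ℝ) / n with hg
  have hkc : ∀ n, (A ∩ Set.Iio n).ncard = k n := by
    intro n
    rw [hk, Nat.count_eq_card_filter_range, ← Set.ncard_coe_finset]
    congr 1
    ext x
    simp [and_comm]
  have himg : ∀ n, ((Nat.nth (· ∈ A) '' S) ∩ Set.Iio n).ncard = (S ∩ Set.Iio (k n)).ncard := by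
    intro n
    rw [← Set.ncard_image_of_injective (S ∩ Set.Iio (k n)) (Nat.nth_injective hA')]
    congr 1
    ext x
    constructor
    · rintro ⟨⟨m, hm, rfl⟩, hx⟩
      exact ⟨m, ⟨hm, (Nat.lt_nth_iff_count_lt hA').2 hx⟩, rfl⟩
    · rintro ⟨m, ⟨hm, hx⟩, rfl⟩
      exact ⟨⟨m, hm, rfl⟩, (Nat.lt_nth_iff_count_lt hA').1 hx⟩
  have hmap : map k atTop = atTop :=
    map_atTop_eq_of_gc (Nat.nth (· ∈ A)) 0 (Nat.count_monotone _)
      (fun a b _ => Nat.gc_count_nth hA' a b)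
      (fun b _ => (Nat.count_nth_of_infinite hA' b).ge)
  have hprod : (fun n : ℕ => (((Nat.nth (· ∈ A) '' S) ∩ Set.Iio n).ncard : ℝ) / n)
      = (g ∘ k) * v := by
    funext n
    simp only [Pi.mul_apply, Function.comp, hg, hv, himg, hkc]
    rcases Nat.eq_zero_or_pos (k n) with h | h
    · simp [h]
    · have : (k n : ℝ) ≠ 0 := by positivity
      field_simp
  have hg0 : ∀ n, 0 ≤ g n := fun n => by positivity
  have hv0 : ∀ n, 0 ≤ v n := fun n => by positivity
  have hg1 : ∀ n, g n ≤ 1 := fun n => by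
    refine div_le_one_of_le₀ ?_ (by positivity)
    have := Set.ncard_le_ncard (Set.inter_subset_right (s := S) (t := Set.Iio n))
      (Set.finite_Iio n)
    have h2 : (Set.Iio n).ncard = n := by simp [Set.ncard_eq_toFinset_card']
    exact_mod_cast h2 ▸ this
  have hd' : Tendsto v atTop (𝓝 c) := hd
  have hlim : limsup (g ∘ k) atTop = limsup g atTop := by
    rw [limsup_comp, hmap]
  have ht : Tendsto (g ∘ k) atTop (𝓝 0) ↔ Tendsto g atTop (𝓝 0) := by
    rw [← tendsto_map'_iff, hmap]
  have hbg : IsBoundedUnder (· ≤ ·) atTop (g ∘ k) :=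
    isBoundedUnder_of ⟨1, fun n => hg1 _⟩
  have hf : ∃ᶠ n in atTop, 0 ≤ (g ∘ k) n := Frequently.of_forall fun n => hg0 _
  have hve : 0 ≤ᶠ[atTop] v := Eventually.of_forall hv0
  constructor
  · unfold upperDensity
    rw [hprod, mul_comm c]
    change _ = limsup g atTop * c
    rw [← hlim]
    apply le_antisymm
    · have := limsup_mul_le hf hbg hve hd'.isBoundedUnder_le
      rwa [hd'.limsup_eq] at this
    · have := le_limsup_mul hf hbg hve hd'.isBoundedUnder_le
      rwa [hd'.liminf_eq] at this
  · unfold HasDensity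
    rw [hprod]
    change _ ↔ Tendsto g atTop (𝓝 0)
    rw [← ht]
    constructor
    · intro h
      have h2 := h.div hd' hc.ne'
      rw [zero_div] at h2
      refine h2.congr' ?_
      filter_upwards [hd'.eventually_ne hc.ne'] with n hn
      simp [hn]
    · intro h
      have h2 := h.mul hd'
      rw [zero_mul] at h2
      exact h2
end
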